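/- arXiv:2002.01167 — 5 statements merged into one kernel-verified Lean document; each statement's English description precedes it below -/
import Mathlib

section
/- Let d ≥ 1 and let μ be the probability measure on ℝ^d with density proportional to exp(−|x|⁴/4). Then for every compactly supported smooth function f : ℝ^d → ℝ one has Ent_μ(f²) ≤ 3√3·e · ∫_{ℝ^d} |∇f|² dμ. In particular, μ satisfies a logarithmic Sobolev inequality with a constant independent of the dimension d. -/
open Real MeasureTheory Finset Matrix Set

noncomputable section

/-- Partial derivative of `f` in the `i`-th coordinate direction. -/
def pd {d : ℕ} (i : Fin d) (f : EuclideanSpace ℝ (Fin d) → ℝ)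
    (x : EuclideanSpace ℝ (Fin d)) : ℝ :=
  fderiv ℝ f x (EuclideanSpace.single i 1)

/-- Laplacian of `f`. -/
def lap {d : ℕ} (f : EuclideanSpace ℝ (Fin d) → ℝ) (x : EuclideanSpace ℝ (Fin d)) : ℝ :=
  ∑ i, pd i (fun y => pd i f y) x

/-- Diffusion operator `L f = Δ f - ∇V ⋅ ∇f` associated with the potential `V`. -/
def diffOp {d : ℕ} (V f : EuclideanSpace ℝ (Fin d) → ℝ) (x : EuclideanSpace ℝ (Fin d)) : ℝ :=
  lap f x - ∑ i, pd i V x * pd i f x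

/-- Hessian matrix of `V` at `x`. -/
def hess {d : ℕ} (V : EuclideanSpace ℝ (Fin d) → ℝ) (x : EuclideanSpace ℝ (Fin d)) :
    Matrix (Fin d) (Fin d) ℝ :=
  Matrix.of fun i j => pd i (fun y => pd j V y) x

/-- Smallest (real) eigenvalue of a matrix: the infimum of its real spectrum. -/
def minEig {d : ℕ} (A : Matrix (Fin d) (Fin d) ℝ) : ℝ :=
  sInf (spectrum ℝ A)

/-- The probability measure with density proportional to `exp (-V)` w.r.t. Lebesgue measure. -/
def gibbs {d : ℕ} (V : EuclideanSpace ℝ (Fin d) → ℝ) : Measure (EuclideanSpace ℝ (Fin d)) :=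
  (∫⁻ x, ENNReal.ofReal (Real.exp (-V x)))⁻¹ •
    volume.withDensity fun x => ENNReal.ofReal (Real.exp (-V x))

/-- Entropy of `g` with respect to the measure `μ`. -/
def entropy {d : ℕ} (μ : Measure (EuclideanSpace ℝ (Fin d)))
    (g : EuclideanSpace ℝ (Fin d) → ℝ) : ℝ :=
  ∫ x, g x * Real.log (g x) ∂μ - (∫ x, g x ∂μ) * Real.log (∫ x, g x ∂μ)

/-- Squared Euclidean norm of the gradient of `f` at `x`. -/
def gradSq {d : ℕ} (f : EuclideanSpace ℝ (Fin d) → ℝ) (x : EuclideanSpace ℝ (Fin d)) : ℝ :=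
  ∑ i, (pd i f x) ^ 2

end

/-!
For `κ > 0` the potential `κ / 2 * ‖x‖ ^ 2 + max (‖x‖ ^ 2 - κ) 0 ^ 2 / 4` is `κ`-strongly convex and
lies between `‖x‖ ^ 4 / 4` and `‖x‖ ^ 4 / 4 + κ ^ 2 / 4`. Strong convexity of a potential improves
the Prékopa–Leindler inequality by a Gaussian factor. Following Bobkov and Ledoux, one applies it
with weights `1 - s` and `s` to `exp (g / (1 - s))` and `1`; the third function can be taken to be
`exp` of `g + s * ‖∇g‖ ^ 2 / (2 * κ)` up to `o(s)`, and differentiating at `s = 0` bounds the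
entropy of `exp g`, which is the logarithmic Sobolev inequality with constant `2 / κ`. By the
Holley–Stroock perturbation principle the quartic then has constant `2 / κ * exp (κ ^ 2 / 4)` in
every dimension.
-/

open Filter InformationTheory
open scoped ENNReal Pointwise Topology

section PrekopaLeindler

lemma volume_add_le_volume_add_of_isCompact {K L : Set ℝ} (hK : IsCompact K) (hL : IsCompact L)
    (hK₀ : K.Nonempty) (hL₀ : L.Nonempty) : volume K + volume L ≤ volume (K + L) := by
  obtain ⟨k, hkK, hk⟩ := hK.exists_isGreatest hK₀
  obtain ⟨l, hlL, hl⟩ := hL.exists_isLeast hL₀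
  have hdisj : AEDisjoint volume ((· + l) '' K) ((k + ·) '' L) := by
    refine measure_mono_null (t := {k + l}) ?_ (by simp)
    rintro _ ⟨⟨x, hx, rfl⟩, ⟨y, hy, hxy⟩⟩
    have hxk : x ≤ k := hk hx
    have hly : l ≤ y := hl hy
    simp only [Set.mem_singleton_iff] at hxy ⊢
    linarith
  have hmeas : MeasurableSet ((k + ·) '' L) := (hL.image (by fun_prop)).measurableSet
  calc volume K + volume L = volume ((· + l) '' K) + volume ((k + ·) '' L) := by
        rw [Set.image_add_right, Set.image_add_left, measure_preimage_add_right,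
          measure_preimage_add]
    _ = volume ((· + l) '' K ∪ (k + ·) '' L) :=
        (measure_union₀ hmeas.nullMeasurableSet hdisj).symm
    _ ≤ volume (K + L) := by
        refine measure_mono (Set.union_subset ?_ ?_)
        · exact Set.image_subset_iff.2 fun x hx => Set.add_mem_add hx hlL
        · exact Set.image_subset_iff.2 fun y hy => Set.add_mem_add hkK hy

lemma volume_add_le_volume_add {A B : Set ℝ} (hA : MeasurableSet A) (hB : MeasurableSet B)
    (hA₀ : A.Nonempty) (hB₀ : B.Nonempty) : volume A + volume B ≤ volume (A + B) := by
  obtain ⟨a, ha⟩ := hA₀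
  obtain ⟨b, hb⟩ := hB₀
  have hcompact : ∀ K ⊆ A, IsCompact K → ∀ L ⊆ B, IsCompact L →
      volume K + volume L ≤ volume (A + B) := fun K hKA hK L hLB hL =>
    calc volume K + volume L ≤ volume (insert a K) + volume (insert b L) := by
          gcongr <;> exact Set.subset_insert _ _
      _ ≤ volume (insert a K + insert b L) :=
          volume_add_le_volume_add_of_isCompact (hK.insert a) (hL.insert b)
            (Set.insert_nonempty _ _) (Set.insert_nonempty _ _)
      _ ≤ volume (A + B) := measure_mono <|
          Set.add_subset_add (Set.insert_subset ha hKA) (Set.insert_subset hb hLB)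
  have hregular {C : Set ℝ} (hC : MeasurableSet C) :
      volume C = ⨆ K : {K : Set ℝ // K ⊆ C ∧ IsCompact K}, volume (K : Set ℝ) := by
    rw [hC.measure_eq_iSup_isCompact, iSup_subtype]
    simp only [iSup_and]
  rw [hregular hA, hregular hB]
  have (C : Set ℝ) : Nonempty {K : Set ℝ // K ⊆ C ∧ IsCompact K} := ⟨⟨∅, by simp⟩⟩
  exact ENNReal.iSup_add_iSup_le fun K L => hcompact K K.2.1 K.2.2 L L.2.1 L.2.2

lemma lintegral_Ioo_measure_ofReal_lt {α : Type*} [MeasurableSpace α] (μ : Measure α)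
    {u : α → ℝ≥0∞} (hu : Measurable u) :
    ∫⁻ l in Ioo (0 : ℝ) 1, μ {x | ENNReal.ofReal l < u x} = ∫⁻ x, min (u x) 1 ∂μ := by
  have hfin (x : α) : min (u x) 1 ≠ ∞ := ne_top_of_le_ne_top ENNReal.one_ne_top (min_le_right _ _)
  have hset {l : ℝ} (hl : 0 < l) :
      {x | l < (min (u x) 1).toReal} = if l < 1 then {x | ENNReal.ofReal l < u x} else ∅ := by
    ext x
    rw [Set.mem_ofPred_eq, ← ENNReal.ofReal_lt_iff_lt_toReal hl.le (hfin x), lt_min_iff,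
      ENNReal.ofReal_lt_one]
    split_ifs with h <;> simp [h]
  calc ∫⁻ l in Ioo (0 : ℝ) 1, μ {x | ENNReal.ofReal l < u x}
      = ∫⁻ l in Ioi (0 : ℝ), μ {x | l < (min (u x) 1).toReal} := by
        rw [← Set.Ioi_inter_Iio, Set.inter_comm, ← Measure.restrict_restrict measurableSet_Iio,
          ← lintegral_indicator measurableSet_Iio]
        refine setLIntegral_congr_fun measurableSet_Ioi fun l hl => ?_
        by_cases h : l < 1 <;> simp [hset hl, h]
    _ = ∫⁻ x, ENNReal.ofReal (min (u x) 1).toReal ∂μ :=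
        (lintegral_eq_lintegral_meas_lt μ (ae_of_all _ fun _ => ENNReal.toReal_nonneg)
          (hu.min measurable_const).ennreal_toReal.aemeasurable).symm
    _ = ∫⁻ x, min (u x) 1 ∂μ := by simp only [ENNReal.ofReal_toReal (hfin _)]

lemma rpow_mul_rpow_le_ofReal_mul_add {a b : ℝ} (ha : 0 < a) (hb : 0 < b) (hab : a + b = 1)
    (p q : ℝ≥0∞) : p ^ a * q ^ b ≤ ENNReal.ofReal a * p + ENNReal.ofReal b * q := by
  have hconj : (a⁻¹).HolderConjugate b⁻¹ :=
    Real.holderConjugate_iff.2 ⟨(one_lt_inv₀ ha).2 (by linarith), by simpa⟩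
  refine (ENNReal.young_inequality (p ^ a) (q ^ b) hconj).trans_eq ?_
  rw [ENNReal.ofReal_inv_of_pos ha, ENNReal.ofReal_inv_of_pos hb]
  simp [← ENNReal.rpow_mul, ha.ne', hb.ne', div_eq_mul_inv, mul_comm]

variable {a b : ℝ}

lemma volume_superlevel_add_le (ha : 0 < a) (hb : 0 < b) (hab : a + b = 1)
    {u v w : ℝ → ℝ≥0∞} (hu : Measurable u) (hv : Measurable v)
    (h : ∀ x y, u x ^ a * v y ^ b ≤ w (a • x + b • y)) {t : ℝ≥0∞} (htu : t < ⨆ x, u x)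
    (htv : t < ⨆ x, v x) :
    ENNReal.ofReal a * volume {x | t < u x} + ENNReal.ofReal b * volume {x | t < v x} ≤
      volume {x | t < w x} := by
  have hsub : a • {x | t < u x} + b • {x | t < v x} ⊆ {x | t < w x} := by
    rintro _ ⟨_, ⟨x, hx, rfl⟩, _, ⟨y, hy, rfl⟩, rfl⟩
    calc t = t ^ a * t ^ b := by
          rw [← ENNReal.rpow_add_of_nonneg _ _ ha.le hb.le, hab, ENNReal.rpow_one]
      _ < u x ^ a * v y ^ b :=
          ENNReal.mul_lt_mul (ENNReal.rpow_lt_rpow hx ha) (ENNReal.rpow_lt_rpow hy hb)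
      _ ≤ w (a • x + b • y) := h x y
  have hu₀ : {x | t < u x}.Nonempty := Set.nonempty_def.2 (lt_iSup_iff.1 htu)
  have hv₀ : {x | t < v x}.Nonempty := Set.nonempty_def.2 (lt_iSup_iff.1 htv)
  calc ENNReal.ofReal a * volume {x | t < u x} + ENNReal.ofReal b * volume {x | t < v x}
      = volume (a • {x | t < u x}) + volume (b • {x | t < v x}) := by
        simp [Measure.addHaar_smul, abs_of_pos ha, abs_of_pos hb]
    _ ≤ volume (a • {x | t < u x} + b • {x | t < v x}) :=
        volume_add_le_volume_add ((measurableSet_lt measurable_const hu).const_smul₀ a)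
          ((measurableSet_lt measurable_const hv).const_smul₀ b) hu₀.smul_set hv₀.smul_set
    _ ≤ volume {x | t < w x} := measure_mono hsub

lemma add_lintegral_le_lintegral_of_iSup_eq_one (ha : 0 < a) (hb : 0 < b) (hab : a + b = 1)
    {u v w : ℝ → ℝ≥0∞} (hu : Measurable u) (hv : Measurable v) (hw : Measurable w)
    (hu₁ : ⨆ x, u x = 1) (hv₁ : ⨆ x, v x = 1)
    (h : ∀ x y, u x ^ a * v y ^ b ≤ w (a • x + b • y)) :
    ENNReal.ofReal a * (∫⁻ x, u x) + ENNReal.ofReal b * (∫⁻ x, v x) ≤ ∫⁻ x, w x := by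
  have hanti (f : ℝ → ℝ≥0∞) : Measurable fun l : ℝ => volume {x | ENNReal.ofReal l < f x} :=
    Antitone.measurable fun l m hlm => measure_mono fun x hx =>
      (ENNReal.ofReal_le_ofReal hlm).trans_lt hx
  have hlayer {f : ℝ → ℝ≥0∞} (hf : Measurable f) (hf₁ : ⨆ x, f x = 1) :
      ∫⁻ x, f x = ∫⁻ l in Ioo (0 : ℝ) 1, volume {x | ENNReal.ofReal l < f x} := by
    rw [lintegral_Ioo_measure_ofReal_lt _ hf]
    exact lintegral_congr fun x => (min_eq_left (hf₁ ▸ le_iSup f x)).symm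
  calc ENNReal.ofReal a * (∫⁻ x, u x) + ENNReal.ofReal b * (∫⁻ x, v x)
      = ∫⁻ l in Ioo (0 : ℝ) 1, (ENNReal.ofReal a * volume {x | ENNReal.ofReal l < u x} +
          ENNReal.ofReal b * volume {x | ENNReal.ofReal l < v x}) := by
        rw [lintegral_add_left ((hanti u).const_mul _), lintegral_const_mul _ (hanti u),
          lintegral_const_mul _ (hanti v), ← hlayer hu hu₁, ← hlayer hv hv₁]
    _ ≤ ∫⁻ l in Ioo (0 : ℝ) 1, volume {x | ENNReal.ofReal l < w x} :=
        setLIntegral_mono (hanti w) fun l hl => volume_superlevel_add_le ha hb hab hu hv h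
          (hu₁ ▸ ENNReal.ofReal_lt_one.2 hl.2) (hv₁ ▸ ENNReal.ofReal_lt_one.2 hl.2)
    _ = ∫⁻ x, min (w x) 1 := lintegral_Ioo_measure_ofReal_lt _ hw
    _ ≤ ∫⁻ x, w x := lintegral_mono fun x => min_le_left _ _

/-- The Prékopa–Leindler inequality for the measure `μ`, in the form without a supremum: `w` is
any measurable majorant of the weighted geometric means of `u` and `v`. -/
def IsPrekopaLeindler {E : Type*} [AddCommMonoid E] [Module ℝ E] [MeasurableSpace E]
    (μ : Measure E) : Prop :=
  ∀ ⦃a b : ℝ⦄, 0 < a → 0 < b → a + b = 1 → ∀ ⦃u v w : E → ℝ≥0∞⦄, Measurable u → Measurable v →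
    Measurable w → (∀ x y, u x ^ a * v y ^ b ≤ w (a • x + b • y)) →
    (∫⁻ x, u x ∂μ) ^ a * (∫⁻ x, v x ∂μ) ^ b ≤ ∫⁻ x, w x ∂μ

lemma prekopaLeindler_of_iSup_ne_top (ha : 0 < a) (hb : 0 < b) (hab : a + b = 1)
    {u v w : ℝ → ℝ≥0∞} (hu : Measurable u) (hv : Measurable v) (hw : Measurable w)
    (hu_top : ⨆ x, u x ≠ ∞) (hv_top : ⨆ x, v x ≠ ∞)
    (h : ∀ x y, u x ^ a * v y ^ b ≤ w (a • x + b • y)) :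
    (∫⁻ x, u x) ^ a * (∫⁻ x, v x) ^ b ≤ ∫⁻ x, w x := by
  set p := ⨆ x, u x
  set q := ⨆ x, v x
  by_cases hp₀ : p = 0
  · simp [ENNReal.iSup_eq_zero.1 hp₀, ha]
  by_cases hq₀ : q = 0
  · simp [ENNReal.iSup_eq_zero.1 hq₀, hb]
  set c := p⁻¹ ^ a * q⁻¹ ^ b with hc
  have hc₀ : c ≠ 0 := by simp [hc, hu_top, hv_top, hp₀, hq₀, ha.not_gt, hb.not_gt]
  have hc_top : c ≠ ∞ := by
    simp [hc, ENNReal.mul_eq_top, hu_top, hv_top, hp₀, hq₀, ha.not_gt, hb.not_gt]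
  have hscale (r s : ℝ≥0∞) : (p⁻¹ * r) ^ a * (q⁻¹ * s) ^ b = c * (r ^ a * s ^ b) := by
    rw [ENNReal.mul_rpow_of_nonneg _ _ ha.le, ENNReal.mul_rpow_of_nonneg _ _ hb.le,
      mul_mul_mul_comm]
  refine (ENNReal.mul_le_mul_iff_right hc₀ hc_top).1 ?_
  calc c * ((∫⁻ x, u x) ^ a * (∫⁻ x, v x) ^ b)
      = (∫⁻ x, p⁻¹ * u x) ^ a * (∫⁻ x, q⁻¹ * v x) ^ b := by
        rw [lintegral_const_mul _ hu, lintegral_const_mul _ hv, hscale]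
    _ ≤ ENNReal.ofReal a * (∫⁻ x, p⁻¹ * u x) + ENNReal.ofReal b * (∫⁻ x, q⁻¹ * v x) :=
        rpow_mul_rpow_le_ofReal_mul_add ha hb hab _ _
    _ ≤ ∫⁻ x, c * w x := by
        refine add_lintegral_le_lintegral_of_iSup_eq_one ha hb hab (hu.const_mul _)
          (hv.const_mul _) (hw.const_mul _) ?_ ?_ fun x y => ?_
        · rw [← ENNReal.mul_iSup, ENNReal.inv_mul_cancel hp₀ hu_top]
        · rw [← ENNReal.mul_iSup, ENNReal.inv_mul_cancel hq₀ hv_top]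
        · rw [hscale]
          gcongr
          exact h x y
    _ = c * ∫⁻ x, w x := lintegral_const_mul _ hw

lemma tendsto_lintegral_min_natCast {α : Type*} [MeasurableSpace α] (μ : Measure α)
    {u : α → ℝ≥0∞} (hu : Measurable u) :
    Tendsto (fun n : ℕ => ∫⁻ x, min (u x) n ∂μ) atTop (𝓝 (∫⁻ x, u x ∂μ)) := by
  refine lintegral_tendsto_of_tendsto_of_monotone
    (fun n => (hu.min measurable_const).aemeasurable)
    (ae_of_all _ fun x m n hmn => min_le_min le_rfl (by exact_mod_cast hmn))
    (ae_of_all _ fun x => ?_)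
  simpa using tendsto_const_nhds.min ENNReal.tendsto_nat_nhds_top

theorem isPrekopaLeindler_volume_real : IsPrekopaLeindler (volume : Measure ℝ) := by
  intro a b ha hb hab u v w hu hv hw h
  by_cases hu₀ : ∫⁻ x, u x = 0
  · simp [hu₀, ha]
  by_cases hv₀ : ∫⁻ x, v x = 0
  · simp [hv₀, hb]
  have hlim {f : ℝ → ℝ≥0∞} (hf : Measurable f) (t : ℝ) :=
    (tendsto_lintegral_min_natCast volume hf).ennrpow_const t
  refine le_of_tendsto (ENNReal.Tendsto.mul (hlim hu a) (Or.inl (by simp [hu₀, ha.not_gt]))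
    (hlim hv b) (Or.inl (by simp [hv₀, hb.not_gt]))) (Eventually.of_forall fun n => ?_)
  have htop (f : ℝ → ℝ≥0∞) : ⨆ x, min (f x) n ≠ ∞ :=
    ne_top_of_le_ne_top (ENNReal.natCast_ne_top n) (iSup_le fun x => min_le_right _ _)
  refine prekopaLeindler_of_iSup_ne_top ha hb hab (hu.min measurable_const)
    (hv.min measurable_const) hw (htop u) (htop v) fun x y => le_trans ?_ (h x y)
  gcongr <;> exact min_le_left _ _

namespace IsPrekopaLeindler

variable {E F : Type*} [AddCommMonoid E] [Module ℝ E] [MeasurableSpace E]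
  [AddCommMonoid F] [Module ℝ F] [MeasurableSpace F] {μ : Measure E} {ν : Measure F}

lemma prod [SFinite ν] (hμ : IsPrekopaLeindler μ) (hν : IsPrekopaLeindler ν) :
    IsPrekopaLeindler (μ.prod ν) := by
  intro a b ha hb hab u v w hu hv hw h
  rw [lintegral_prod _ hu.aemeasurable, lintegral_prod _ hv.aemeasurable,
    lintegral_prod _ hw.aemeasurable]
  refine hμ ha hb hab hu.lintegral_prod_right' hv.lintegral_prod_right' hw.lintegral_prod_right'
    fun x y => ?_
  exact hν ha hb hab (hu.comp measurable_prodMk_left) (hv.comp measurable_prodMk_left)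
    (hw.comp measurable_prodMk_left) fun p q => h (x, p) (y, q)

lemma map (hμ : IsPrekopaLeindler μ) (L : E →ₗ[ℝ] F) (hL : Measurable L) :
    IsPrekopaLeindler (μ.map L) := by
  intro a b ha hb hab u v w hu hv hw h
  rw [lintegral_map hu hL, lintegral_map hv hL, lintegral_map hw hL]
  refine hμ ha hb hab (hu.comp hL) (hv.comp hL) (hw.comp hL) fun x y => ?_
  simpa using h (L x) (L y)

lemma smul (hμ : IsPrekopaLeindler μ) (c : ℝ≥0∞) : IsPrekopaLeindler (c • μ) := by
  intro a b ha hb hab u v w hu hv hw h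
  simp only [lintegral_smul_measure, smul_eq_mul]
  calc (c * ∫⁻ x, u x ∂μ) ^ a * (c * ∫⁻ x, v x ∂μ) ^ b
      = c ^ a * c ^ b * ((∫⁻ x, u x ∂μ) ^ a * (∫⁻ x, v x ∂μ) ^ b) := by
        rw [ENNReal.mul_rpow_of_nonneg _ _ ha.le, ENNReal.mul_rpow_of_nonneg _ _ hb.le,
          mul_mul_mul_comm]
    _ ≤ c * ∫⁻ x, w x ∂μ := by
        rw [← ENNReal.rpow_add_of_nonneg _ _ ha.le hb.le, hab, ENNReal.rpow_one]
        gcongr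
        exact hμ ha hb hab hu hv hw h

end IsPrekopaLeindler

theorem isPrekopaLeindler_volume_pi (n : ℕ) : IsPrekopaLeindler (volume : Measure (Fin n → ℝ)) := by
  induction n with
  | zero =>
    intro a b _ _ _ u v w _ _ _ h
    rw [volume_pi, Measure.pi_of_empty]
    simp only [lintegral_dirac]
    convert h default default
  | succ n ih =>
    let cons := (Fin.consLinearEquiv ℝ fun _ : Fin (n + 1) => ℝ).toLinearMap
    have hcons : ⇑(MeasurableEquiv.piFinSuccAbove (fun _ : Fin (n + 1) => ℝ) 0).symm = cons := by
      ext ⟨x, y⟩ i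
      exact congrFun (Fin.insertNth_zero' x y) i
    rw [← (volume_preserving_piFinSuccAbove (fun _ => ℝ) 0).symm.map_eq, hcons]
    exact (isPrekopaLeindler_volume_real.prod ih).map cons
      cons.continuous_of_finiteDimensional.measurable

theorem isPrekopaLeindler_addHaar {E : Type*} [NormedAddCommGroup E] [NormedSpace ℝ E]
    [FiniteDimensional ℝ E] [MeasurableSpace E] [BorelSpace E] (μ : Measure E)
    [μ.IsAddHaarMeasure] : IsPrekopaLeindler μ := by
  let e : (Fin (Module.finrank ℝ E) → ℝ) ≃L[ℝ] E :=
    ContinuousLinearEquiv.ofFinrankEq (by simp)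
  rw [Measure.isAddLeftInvariant_eq_smul μ (volume.map e)]
  exact ((isPrekopaLeindler_volume_pi _).map e.toLinearEquiv.toLinearMap
    e.continuous.measurable).smul _

end PrekopaLeindler

section StrongPrekopaLeindler

/-- The Prékopa–Leindler inequality for the measure `μ` with curvature `κ`: the geometric mean of
`u x` and `v y` may exceed `w` by the Gaussian factor `exp (a b κ ‖x - y‖² / 2)`. For `κ > 0` this
is the form in which strong log-concavity of `μ` enters the Bobkov–Ledoux argument. -/
def IsStrongPrekopaLeindler {E : Type*} [SeminormedAddCommGroup E] [Module ℝ E] [MeasurableSpace E]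
    (κ : ℝ) (μ : Measure E) : Prop :=
  ∀ ⦃a b : ℝ⦄, 0 < a → 0 < b → a + b = 1 → ∀ ⦃u v w : E → ℝ≥0∞⦄, Measurable u → Measurable v →
    Measurable w →
    (∀ x y, u x ^ a * v y ^ b * ENNReal.ofReal (exp (-(a * b * (κ / 2 * ‖x - y‖ ^ 2)))) ≤
      w (a • x + b • y)) →
    (∫⁻ x, u x ∂μ) ^ a * (∫⁻ x, v x ∂μ) ^ b ≤ ∫⁻ x, w x ∂μ

lemma ofReal_exp_rpow (s a : ℝ) : ENNReal.ofReal (exp s) ^ a = ENNReal.ofReal (exp (a * s)) := by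
  rw [ENNReal.ofReal_rpow_of_pos (exp_pos s), ← exp_mul, mul_comm]

theorem IsPrekopaLeindler.withDensity_exp_neg {E : Type*} [NormedAddCommGroup E] [NormedSpace ℝ E]
    [MeasurableSpace E] {μ : Measure E} (hμ : IsPrekopaLeindler μ) {κ : ℝ} {W : E → ℝ}
    (hWm : Measurable W) (hW : StrongConvexOn univ κ W) :
    IsStrongPrekopaLeindler κ (μ.withDensity fun x => ENNReal.ofReal (exp (-W x))) := by
  intro a b ha hb hab u v w hu hv hw h
  set ρ : E → ℝ≥0∞ := fun x => ENNReal.ofReal (exp (-W x))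
  have hρ : Measurable ρ := by fun_prop
  have hρ_geom (x y : E) : ρ x ^ a * ρ y ^ b ≤
      ρ (a • x + b • y) * ENNReal.ofReal (exp (-(a * b * (κ / 2 * ‖x - y‖ ^ 2)))) := by
    simp only [ρ, ofReal_exp_rpow]
    rw [← ENNReal.ofReal_mul (exp_nonneg _), ← ENNReal.ofReal_mul (exp_nonneg _), ← exp_add,
      ← exp_add]
    have hconv := hW.2 (mem_univ x) (mem_univ y) ha.le hb.le hab
    simp only [smul_eq_mul] at hconv
    refine ENNReal.ofReal_le_ofReal (exp_le_exp.2 ?_)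
    linarith
  simp only [lintegral_withDensity_eq_lintegral_mul μ hρ hu,
    lintegral_withDensity_eq_lintegral_mul μ hρ hv, lintegral_withDensity_eq_lintegral_mul μ hρ hw]
  refine hμ ha hb hab (hρ.mul hu) (hρ.mul hv) (hρ.mul hw) fun x y => ?_
  calc (ρ x * u x) ^ a * (ρ y * v y) ^ b = ρ x ^ a * ρ y ^ b * (u x ^ a * v y ^ b) := by
        rw [ENNReal.mul_rpow_of_nonneg _ _ ha.le, ENNReal.mul_rpow_of_nonneg _ _ hb.le,
          mul_mul_mul_comm]
    _ ≤ ρ (a • x + b • y) * ENNReal.ofReal (exp (-(a * b * (κ / 2 * ‖x - y‖ ^ 2)))) *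
        (u x ^ a * v y ^ b) := mul_le_mul_left (hρ_geom x y) _
    _ ≤ ρ (a • x + b • y) * w (a • x + b • y) := by
        rw [mul_right_comm, mul_assoc]
        exact mul_le_mul_right (h x y) _

lemma IsStrongPrekopaLeindler.mul_log_integral_exp_le {E : Type*} [SeminormedAddCommGroup E]
    [Module ℝ E] [MeasurableSpace E] {μ : Measure E} [IsProbabilityMeasure μ] {κ : ℝ}
    (hμ : IsStrongPrekopaLeindler κ μ) {a b : ℝ} (ha : 0 < a) (hb : 0 < b) (hab : a + b = 1)
    {g q : E → ℝ} (hg : Measurable g) (hq : Measurable q)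
    (hgi : Integrable (fun x => exp (g x / a)) μ) (hqi : Integrable (fun x => exp (q x)) μ)
    (h : ∀ x y, g x ≤ q (a • x + b • y) + a * b * (κ / 2 * ‖x - y‖ ^ 2)) :
    a * log (∫ x, exp (g x / a) ∂μ) ≤ log (∫ x, exp (q x) ∂μ) := by
  have hofReal {f : E → ℝ} (hf : Integrable (fun x => exp (f x)) μ) :
      ENNReal.ofReal (∫ x, exp (f x) ∂μ) = ∫⁻ x, ENNReal.ofReal (exp (f x)) ∂μ :=
    ofReal_integral_eq_lintegral_ofReal hf (ae_of_all _ fun x => exp_nonneg _)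
  have hlint : (∫⁻ x, ENNReal.ofReal (exp (g x / a)) ∂μ) ^ a ≤
      ∫⁻ x, ENNReal.ofReal (exp (q x)) ∂μ := by
    have := hμ ha hb hab (u := fun x => ENNReal.ofReal (exp (g x / a))) (v := fun _ => 1)
      (w := fun x => ENNReal.ofReal (exp (q x))) (by fun_prop) measurable_const (by fun_prop)
      fun x y => by
        rw [ENNReal.one_rpow, mul_one, ofReal_exp_rpow, ← ENNReal.ofReal_mul (exp_nonneg _),
          ← exp_add, mul_div_cancel₀ _ ha.ne']
        gcongr
        linarith [h x y]
    simpa using this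
  have hpos : 0 < ∫ x, exp (g x / a) ∂μ := integral_exp_pos hgi
  rw [← log_rpow hpos]
  refine log_le_log (by positivity) ?_
  rwa [← ENNReal.ofReal_le_ofReal_iff (integral_nonneg fun x => exp_nonneg _),
    ← ENNReal.ofReal_rpow_of_pos hpos, hofReal hgi, hofReal hqi]

end StrongPrekopaLeindler

section InfConvolution

variable {E : Type*} [NormedAddCommGroup E] [NormedSpace ℝ E] {g : E → ℝ}

lemma exists_forall_norm_le_imp_le_add_mul_norm (hg : Differentiable ℝ g)
    (hg' : UniformContinuous (fderiv ℝ g)) {η : ℝ} (hη : 0 < η) :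
    ∃ r > 0, ∀ z h, ‖h‖ < r → g (z + h) ≤ g z + (‖fderiv ℝ g z‖ + η) * ‖h‖ := by
  obtain ⟨r, hr, hclose⟩ := Metric.uniformContinuous_iff.1 hg' η hη
  refine ⟨r, hr, fun z h hh => ?_⟩
  have htaylor : ‖g (z + h) - g z - fderiv ℝ g z (z + h - z)‖ ≤ η * ‖z + h - z‖ :=
    (convex_ball z r).norm_image_sub_le_of_norm_fderiv_le' (fun x _ => hg x)
      (fun x hx => by simpa [dist_eq_norm] using (hclose hx).le) (Metric.mem_ball_self hr)
      (by simpa)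
  rw [add_sub_cancel_left, Real.norm_eq_abs] at htaylor
  have hlin : fderiv ℝ g z h ≤ ‖fderiv ℝ g z‖ * ‖h‖ :=
    (le_abs_self _).trans ((fderiv ℝ g z).le_opNorm h)
  linarith [(abs_le.1 htaylor).2]

lemma le_add_mul_sq_norm_of_four_mul_le (hg : Differentiable ℝ g) {G : ℝ}
    (hG : ∀ x, ‖fderiv ℝ g x‖ ≤ G) {κ s : ℝ} (hs : 0 ≤ s) (hs' : s ≤ 1 / 2) {z h : E}
    (hh : 4 * G ≤ κ * ‖h‖) : g (z + s • h) ≤ g z + (1 - s) * s * (κ / 2 * ‖h‖ ^ 2) := by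
  have hlip : g (z + s • h) - g z ≤ G * (s * ‖h‖) := by
    have := convex_univ.norm_image_sub_le_of_norm_fderiv_le (fun x _ => hg x) (fun x _ => hG x)
      (mem_univ z) (mem_univ (z + s • h))
    rw [add_sub_cancel_left, norm_smul, Real.norm_of_nonneg hs] at this
    exact (le_abs_self _).trans this
  have hG₀ : 0 ≤ G := (norm_nonneg _).trans (hG z)
  have hquad : G * ‖h‖ ≤ (1 - s) * (κ / 2 * ‖h‖ ^ 2) :=
    calc G * ‖h‖ ≤ 1 / 2 * (κ / 2 * ‖h‖ ^ 2) := by nlinarith [norm_nonneg h]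
      _ ≤ (1 - s) * (κ / 2 * ‖h‖ ^ 2) := by
        have : 0 ≤ κ / 2 * ‖h‖ ^ 2 := by nlinarith [norm_nonneg h]
        gcongr
        linarith
  nlinarith

-- Inf-convolving `g` with a quadratic of curvature `κ / s` costs `s ‖∇g‖² / (2κ)` to first order.
lemma eventually_forall_le_add_sq_norm_fderiv (hg : Differentiable ℝ g)
    (hg' : UniformContinuous (fderiv ℝ g)) {G : ℝ} (hG : ∀ x, ‖fderiv ℝ g x‖ ≤ G) {κ δ : ℝ}
    (hκ : 0 < κ) (hδ : 0 < δ) :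
    ∀ᶠ s : ℝ in 𝓝[>] 0, ∀ z h, g (z + s • h) ≤
      g z + s * (‖fderiv ℝ g z‖ ^ 2 / (2 * κ) + δ) + (1 - s) * s * (κ / 2 * ‖h‖ ^ 2) := by
  have hG₀ : 0 ≤ G := (norm_nonneg _).trans (hG 0)
  set R := 4 * G / κ + 1
  have hR₀ : 0 < R := by positivity
  obtain ⟨r, hr, hnear⟩ := exists_forall_norm_le_imp_le_add_mul_norm hg hg'
    (η := δ / (2 * R)) (by positivity)
  have hs_small : ∀ᶠ s : ℝ in 𝓝[>] 0, s < 1 / 2 ∧ s * R < r ∧ s * (κ * R ^ 2) < δ := by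
    have htendsto (c : ℝ) : Tendsto (fun s : ℝ => s * c) (𝓝[>] 0) (𝓝 0) :=
      tendsto_nhdsWithin_of_tendsto_nhds (by simpa using (tendsto_id (x := 𝓝 (0 : ℝ))).mul_const c)
    filter_upwards [(htendsto 1).eventually_lt_const (by norm_num : (0 : ℝ) < 1 / 2),
      (htendsto R).eventually_lt_const hr, (htendsto (κ * R ^ 2)).eventually_lt_const hδ]
      with s h₁ h₂ h₃ using ⟨by simpa using h₁, h₂, h₃⟩
  filter_upwards [hs_small, self_mem_nhdsWithin] with s ⟨hs₁, hs₂, hs₃⟩ (hs : 0 < s) z h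
  set p := ‖fderiv ℝ g z‖
  have hnorm : ‖s • h‖ = s * ‖h‖ := by rw [norm_smul, Real.norm_of_nonneg hs.le]
  rcases le_or_gt ‖h‖ R with hh | hh
  · have hstep := hnear z (s • h) (by rw [hnorm]; nlinarith)
    have hamgm : p * ‖h‖ ≤ p ^ 2 / (2 * κ) + κ / 2 * ‖h‖ ^ 2 := by
      rw [← sub_nonneg, show p ^ 2 / (2 * κ) + κ / 2 * ‖h‖ ^ 2 - p * ‖h‖ =
        (p - κ * ‖h‖) ^ 2 / (2 * κ) by field_simp; ring]
      positivity
    have hη : δ / (2 * R) * ‖h‖ ≤ δ / 2 := by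
      calc δ / (2 * R) * ‖h‖ ≤ δ / (2 * R) * R := by gcongr
        _ = δ / 2 := by field_simp
    have hquad : s * (κ * ‖h‖ ^ 2) ≤ δ := (by gcongr : _ ≤ s * (κ * R ^ 2)).trans hs₃.le
    rw [hnorm] at hstep
    nlinarith
  · have hfar : 4 * G ≤ κ * ‖h‖ := by
      calc 4 * G = κ * (4 * G / κ) := by field_simp
        _ ≤ κ * ‖h‖ := by gcongr; linarith
    have := le_add_mul_sq_norm_of_four_mul_le hg hG hs.le hs₁.le hfar (z := z)
    have : 0 ≤ s * (p ^ 2 / (2 * κ) + δ) := by positivity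
    linarith

end InfConvolution

section FirstVariation

lemma integrable_comp_of_norm_le {α F : Type*} [MeasurableSpace α] {μ : Measure α}
    [IsFiniteMeasure μ] [NormedAddCommGroup F] [ProperSpace F] {φ : F → ℝ} (hφ : Continuous φ)
    {g : α → F} (hg : AEStronglyMeasurable g μ) {C : ℝ} (hC : ∀ x, ‖g x‖ ≤ C) :
    Integrable (fun x => φ (g x)) μ := by
  obtain ⟨D, hD⟩ := (isCompact_closedBall (0 : F) C).exists_bound_of_continuousOn hφ.continuousOn
  exact .of_bound (hφ.comp_aestronglyMeasurable hg) D
    (ae_of_all _ fun x => hD _ (mem_closedBall_zero_iff.2 (hC x)))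

lemma hasDerivAt_integral_exp_add_mul {α : Type*} [MeasurableSpace α] {μ : Measure α}
    [IsFiniteMeasure μ] {g k : α → ℝ} (hg : AEStronglyMeasurable g μ)
    (hk : AEStronglyMeasurable k μ) {M K : ℝ} (hM : ∀ x, |g x| ≤ M) (hK : ∀ x, |k x| ≤ K) :
    HasDerivAt (fun s => ∫ x, exp (g x + s * k x) ∂μ) (∫ x, k x * exp (g x) ∂μ) 0 := by
  have hbound (x : α) {s : ℝ} (hs : s ∈ Metric.ball (0 : ℝ) 1) :
      ‖k x * exp (g x + s * k x)‖ ≤ K * exp (M + K) := by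
    have hsk : s * k x ≤ K := (le_abs_self _).trans <| by
      rw [abs_mul]
      have : |s| < 1 := by simpa using hs
      nlinarith [abs_nonneg (k x), hK x]
    rw [norm_mul, Real.norm_eq_abs, Real.norm_of_nonneg (exp_nonneg _)]
    have := (abs_nonneg _).trans (hK x)
    gcongr
    exacts [hK x, (le_abs_self _).trans (hM x)]
  have hderiv := hasDerivAt_integral_of_dominated_loc_of_deriv_le (μ := μ) (x₀ := (0 : ℝ))
    (F := fun s x => exp (g x + s * k x)) (F' := fun s x => k x * exp (g x + s * k x))
    (Metric.ball_mem_nhds 0 one_pos)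
    (Eventually.of_forall fun s =>
      continuous_exp.comp_aestronglyMeasurable (hg.add (hk.const_mul s)))
    (by simpa using integrable_comp_of_norm_le continuous_exp hg hM)
    (by simpa using hk.fun_mul (continuous_exp.comp_aestronglyMeasurable hg))
    (ae_of_all _ fun x s => hbound x) (integrable_const _)
    (ae_of_all _ fun x s _ => by
      simpa [mul_comm] using (((hasDerivAt_id s).mul_const (k x)).const_add (g x)).exp)
  simpa using hderiv.2

lemma deriv_le_of_eventually_le_right {φ ψ : ℝ → ℝ} {φ' ψ' t : ℝ} (hφ : HasDerivAt φ φ' t)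
    (hψ : HasDerivAt ψ ψ' t) (heq : φ t = ψ t) (hle : ∀ᶠ s in 𝓝[>] 0, φ (t + s) ≤ ψ (t + s)) :
    φ' ≤ ψ' := by
  refine le_of_tendsto_of_tendsto hφ.tendsto_slope_zero_right hψ.tendsto_slope_zero_right ?_
  filter_upwards [hle, self_mem_nhdsWithin] with s hs (hs₀ : 0 < s)
  rw [heq]
  gcongr

variable {d : ℕ} {μ : Measure (EuclideanSpace ℝ (Fin d))}

lemma entropy_exp_le_of_eventually_mul_log_integral_le [IsFiniteMeasure μ] [NeZero μ]
    {g k : EuclideanSpace ℝ (Fin d) → ℝ} (hg : AEStronglyMeasurable g μ)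
    (hk : AEStronglyMeasurable k μ) {M K : ℝ} (hM : ∀ x, |g x| ≤ M) (hK : ∀ x, |k x| ≤ K)
    (h : ∀ᶠ s : ℝ in 𝓝[>] 0, (1 - s) * log (∫ x, exp (g x / (1 - s)) ∂μ) ≤
      log (∫ x, exp (g x + s * k x) ∂μ)) :
    entropy μ (fun x => exp (g x)) ≤ ∫ x, k x * exp (g x) ∂μ := by
  set Z := ∫ x, exp (g x) ∂μ with hZ
  have hZ₀ : 0 < Z := integral_exp_pos (integrable_comp_of_norm_le continuous_exp hg hM)
  have hlog {u : EuclideanSpace ℝ (Fin d) → ℝ} (hu : AEStronglyMeasurable u μ) {U : ℝ}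
      (hU : ∀ x, |u x| ≤ U) : HasDerivAt (fun s => log (∫ x, exp (g x + s * u x) ∂μ))
        ((∫ x, u x * exp (g x) ∂μ) / Z) 0 := by
    simpa [hZ] using (hasDerivAt_integral_exp_add_mul hg hu hM hU).log (by simpa using hZ₀.ne')
  have hleft : HasDerivAt (fun s => (1 - s) * log (∫ x, exp (g x + s / (1 - s) * g x) ∂μ))
      ((∫ x, g x * exp (g x) ∂μ) / Z - log Z) 0 := by
    have hsub : HasDerivAt (fun s : ℝ => 1 - s) (-1) 0 := by
      simpa using (hasDerivAt_id (0 : ℝ)).const_sub 1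
    have hdiv : HasDerivAt (fun s : ℝ => s / (1 - s)) 1 0 := by
      simpa using (hasDerivAt_id (0 : ℝ)).fun_div hsub (by norm_num)
    have hcomp := HasDerivAt.comp (0 : ℝ) (by simpa using hlog hg hM) hdiv
    refine (hsub.mul hcomp).congr_deriv ?_
    simp only [Function.comp_apply, sub_zero, div_one, zero_mul, add_zero, ← hZ, neg_mul, one_mul,
      mul_one]
    ring
  have hslope : (∫ x, g x * exp (g x) ∂μ) / Z - log Z ≤ (∫ x, k x * exp (g x) ∂μ) / Z := by
    refine deriv_le_of_eventually_le_right hleft (hlog hk hK) (by simp) ?_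
    filter_upwards [h, Ioo_mem_nhdsGT (zero_lt_one' ℝ)] with s hs hs₁
    have hs₀ : 1 - s ≠ 0 := by linarith [hs₁.2]
    have hdiv (x) : g x + s / (1 - s) * g x = g x / (1 - s) := by field_simp; ring
    simpa only [zero_add, hdiv] using hs
  rw [div_sub' hZ₀.ne', div_le_div_iff_of_pos_right hZ₀] at hslope
  simpa only [entropy, log_exp, ← hZ, mul_comm] using hslope

end FirstVariation

section GradSq

variable {d : ℕ} {f g : EuclideanSpace ℝ (Fin d) → ℝ}

lemma gradSq_eq_sq_norm_fderiv (f : EuclideanSpace ℝ (Fin d) → ℝ) (x : EuclideanSpace ℝ (Fin d)) :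
    gradSq f x = ‖fderiv ℝ f x‖ ^ 2 := by
  rw [(EuclideanSpace.basisFun (Fin d) ℝ).norm_dual]
  simp [gradSq, pd]

lemma gradSq_nonneg (f : EuclideanSpace ℝ (Fin d) → ℝ) (x : EuclideanSpace ℝ (Fin d)) :
    0 ≤ gradSq f x :=
  Finset.sum_nonneg fun _ _ => sq_nonneg _

lemma continuous_gradSq (hf : ContDiff ℝ 1 f) : Continuous (gradSq f) := by
  rw [funext (gradSq_eq_sq_norm_fderiv f)]
  exact (hf.continuous_fderiv one_ne_zero).norm.pow 2

lemma integrable_gradSq {μ : Measure (EuclideanSpace ℝ (Fin d))} [IsFiniteMeasureOnCompacts μ]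
    (hf : ContDiff ℝ 1 f) (hc : HasCompactSupport f) : Integrable (gradSq f) μ := by
  refine (continuous_gradSq hf).integrable_of_hasCompactSupport ?_
  rw [funext (gradSq_eq_sq_norm_fderiv f)]
  exact (hc.fderiv ℝ).comp_left (g := fun L => ‖L‖ ^ 2) (by simp)

end GradSq

section BobkovLedoux

variable {d : ℕ} {μ : Measure (EuclideanSpace ℝ (Fin d))} [IsProbabilityMeasure μ] {κ : ℝ}
  {g : EuclideanSpace ℝ (Fin d) → ℝ} {M G : ℝ}

lemma IsStrongPrekopaLeindler.entropy_exp_le_integral_add (hμ : IsStrongPrekopaLeindler κ μ)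
    (hκ : 0 < κ) (hg : ContDiff ℝ 1 g) (hg' : UniformContinuous (fderiv ℝ g))
    (hM : ∀ x, |g x| ≤ M) (hG : ∀ x, ‖fderiv ℝ g x‖ ≤ G) {δ : ℝ} (hδ : 0 < δ) :
    entropy μ (fun x => exp (g x)) ≤ ∫ x, (gradSq g x / (2 * κ) + δ) * exp (g x) ∂μ := by
  have hgm : Measurable g := hg.continuous.measurable
  have hk : Measurable fun x => gradSq g x / (2 * κ) + δ :=
    ((continuous_gradSq hg).measurable.div_const _).add_const _
  have hk_le (x) : |gradSq g x / (2 * κ) + δ| ≤ G ^ 2 / (2 * κ) + δ := by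
    rw [gradSq_eq_sq_norm_fderiv, abs_of_nonneg (by positivity)]
    gcongr
    exact hG x
  have hexp {u : EuclideanSpace ℝ (Fin d) → ℝ} (hu : Measurable u) {U : ℝ}
      (hU : ∀ x, |u x| ≤ U) : Integrable (fun x => exp (u x)) μ :=
    integrable_comp_of_norm_le continuous_exp hu.aestronglyMeasurable hU
  refine entropy_exp_le_of_eventually_mul_log_integral_le hgm.aestronglyMeasurable
    hk.aestronglyMeasurable hM hk_le ?_
  filter_upwards [eventually_forall_le_add_sq_norm_fderiv (hg.differentiable one_ne_zero) hg' hG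
    hκ hδ, Ioo_mem_nhdsGT (zero_lt_one' ℝ)] with s hs ⟨hs₀, hs₁⟩
  have hs₁' : 0 < 1 - s := by linarith
  refine hμ.mul_log_integral_exp_le hs₁' hs₀ (by ring) hgm (by fun_prop)
    (hexp (by fun_prop) (U := M / (1 - s)) fun x => ?_)
    (hexp (by fun_prop) (U := M + s * (G ^ 2 / (2 * κ) + δ)) fun x => ?_) fun x y => ?_
  · rw [abs_div, abs_of_pos hs₁']
    gcongr
    exact hM x
  · refine (abs_add_le _ _).trans ?_
    rw [abs_mul, abs_of_pos hs₀]
    gcongr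
    exacts [hM x, hk_le x]
  · have := hs ((1 - s) • x + s • y) (x - y)
    rw [show (1 - s) • x + s • y + s • (x - y) = x by module] at this
    simpa only [gradSq_eq_sq_norm_fderiv] using this

theorem IsStrongPrekopaLeindler.entropy_exp_le (hμ : IsStrongPrekopaLeindler κ μ) (hκ : 0 < κ)
    (hg : ContDiff ℝ 1 g) (hg' : UniformContinuous (fderiv ℝ g)) (hM : ∀ x, |g x| ≤ M)
    (hG : ∀ x, ‖fderiv ℝ g x‖ ≤ G) :
    entropy μ (fun x => exp (g x)) ≤ (2 * κ)⁻¹ * ∫ x, gradSq g x * exp (g x) ∂μ := by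
  have hexp : Integrable (fun x => exp (g x)) μ :=
    integrable_comp_of_norm_le continuous_exp hg.continuous.aestronglyMeasurable hM
  have hgrad : Integrable (fun x => gradSq g x * exp (g x)) μ := by
    refine hexp.bdd_mul (c := G ^ 2) (continuous_gradSq hg).aestronglyMeasurable
      (ae_of_all _ fun x => ?_)
    rw [gradSq_eq_sq_norm_fderiv, norm_pow, norm_norm]
    exact pow_le_pow_left₀ (norm_nonneg _) (hG x) 2
  set Z := ∫ x, exp (g x) ∂μ with hZ
  have hZ₀ : 0 < Z := integral_exp_pos hexp
  refine le_of_forall_pos_le_add fun ε hε => ?_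
  calc entropy μ (fun x => exp (g x))
      ≤ ∫ x, (gradSq g x / (2 * κ) + ε / Z) * exp (g x) ∂μ :=
        hμ.entropy_exp_le_integral_add hκ hg hg' hM hG (by positivity)
    _ = ∫ x, (2 * κ)⁻¹ * (gradSq g x * exp (g x)) + ε / Z * exp (g x) ∂μ := by
        congr with x
        ring
    _ = (2 * κ)⁻¹ * ∫ x, gradSq g x * exp (g x) ∂μ + ε := by
        rw [integral_add (hgrad.const_mul _) (hexp.const_mul _), integral_const_mul,
          integral_const_mul, ← hZ, div_mul_cancel₀ _ hZ₀.ne']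

end BobkovLedoux

section LogSobolev

/-- The logarithmic Sobolev inequality with constant `C`, tested on compactly supported `C¹`
functions: `entropy μ (f²) ≤ C ∫ |∇f|² dμ`. -/
def LogSobolev {d : ℕ} (μ : Measure (EuclideanSpace ℝ (Fin d))) (C : ℝ) : Prop :=
  ∀ ⦃f : EuclideanSpace ℝ (Fin d) → ℝ⦄, ContDiff ℝ 1 f → HasCompactSupport f →
    entropy μ (fun x => f x ^ 2) ≤ C * ∫ x, gradSq f x ∂μ

lemma tendsto_integral_comp_add {α : Type*} [MeasurableSpace α] {μ : Measure α} [IsFiniteMeasure μ]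
    {φ : ℝ → ℝ} (hφ : Continuous φ) {g : α → ℝ} (hg : AEStronglyMeasurable g μ) {M : ℝ}
    (hM : ∀ x, |g x| ≤ M) :
    Tendsto (fun ε => ∫ x, φ (g x + ε) ∂μ) (𝓝 0) (𝓝 (∫ x, φ (g x) ∂μ)) := by
  obtain ⟨D, hD⟩ := (isCompact_closedBall (0 : ℝ) (M + 1)).exists_bound_of_continuousOn
    hφ.continuousOn
  refine tendsto_integral_filter_of_dominated_convergence (fun _ => D)
    (Eventually.of_forall fun ε => hφ.comp_aestronglyMeasurable (hg.add_const ε)) ?_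
    (integrable_const _) (ae_of_all _ fun x => ?_)
  · filter_upwards [Metric.ball_mem_nhds (0 : ℝ) one_pos] with ε hε
    refine ae_of_all _ fun x => hD _ (mem_closedBall_zero_iff.2 ?_)
    exact (norm_add_le _ _).trans (add_le_add (hM x) (mem_ball_zero_iff.1 hε).le)
  · exact (hφ.comp (continuous_const.add continuous_id)).tendsto' _ _ (by simp)

variable {d : ℕ} {μ : Measure (EuclideanSpace ℝ (Fin d))}

lemma tendsto_entropy_add [IsFiniteMeasure μ] {g : EuclideanSpace ℝ (Fin d) → ℝ}
    (hg : AEStronglyMeasurable g μ) {M : ℝ} (hM : ∀ x, |g x| ≤ M) :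
    Tendsto (fun ε => entropy μ fun x => g x + ε) (𝓝 0) (𝓝 (entropy μ g)) := by
  have hint := tendsto_integral_comp_add continuous_id hg hM
  exact (tendsto_integral_comp_add continuous_mul_log hg hM).sub
    ((continuous_mul_log.tendsto _).comp hint)

variable [IsProbabilityMeasure μ] {κ : ℝ} {f : EuclideanSpace ℝ (Fin d) → ℝ}

lemma IsStrongPrekopaLeindler.entropy_exp_comp_le (hμ : IsStrongPrekopaLeindler κ μ) (hκ : 0 < κ)
    (hf : ContDiff ℝ 1 f) (hc : HasCompactSupport f) {φ : ℝ → ℝ} (hφ : ContDiff ℝ 1 φ) :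
    entropy μ (fun x => exp (φ (f x))) ≤
      (2 * κ)⁻¹ * ∫ x, deriv φ (f x) ^ 2 * gradSq f x * exp (φ (f x)) ∂μ := by
  have hg : ContDiff ℝ 1 fun x => φ (f x) := hφ.comp hf
  have hfderiv : fderiv ℝ (fun x => φ (f x)) = fun x => deriv φ (f x) • fderiv ℝ f x :=
    funext fun x => ((hφ.differentiable one_ne_zero _).hasDerivAt.comp_hasFDerivAt x
      (hf.differentiable one_ne_zero x).hasFDerivAt).fderiv
  have hg' : Continuous (fderiv ℝ fun x => φ (f x)) := hg.continuous_fderiv one_ne_zero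
  have hgc : HasCompactSupport (fderiv ℝ fun x => φ (f x)) := by
    rw [hfderiv]
    exact (hc.fderiv ℝ).smul_left (f := fun x => deriv φ (f x))
  obtain ⟨B, hB⟩ := hc.exists_bound_of_continuous hf.continuous
  obtain ⟨M, hM⟩ := (isCompact_closedBall (0 : ℝ) B).exists_bound_of_continuousOn
    hφ.continuous.continuousOn
  obtain ⟨G, hG⟩ := hgc.exists_bound_of_continuous hg'
  refine (hμ.entropy_exp_le hκ hg (hgc.uniformContinuous_of_continuous hg')
    (fun x => hM _ (mem_closedBall_zero_iff.2 (hB x))) hG).trans_eq ?_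
  simp only [gradSq_eq_sq_norm_fderiv, hfderiv, norm_smul, mul_pow, Real.norm_eq_abs, sq_abs]

theorem IsStrongPrekopaLeindler.logSobolev (hμ : IsStrongPrekopaLeindler κ μ) (hκ : 0 < κ) :
    LogSobolev μ (2 / κ) := by
  intro f hf hc
  have hsq : Continuous fun x => f x ^ 2 := by have := hf.continuous; fun_prop
  obtain ⟨B, hB⟩ := (hc.comp_left (g := (· ^ 2)) (by simp)).exists_bound_of_continuous hsq
  refine le_of_tendsto ((tendsto_entropy_add hsq.aestronglyMeasurable hB).mono_left
    (nhdsWithin_le_nhds (s := Ioi 0))) ?_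
  filter_upwards [self_mem_nhdsWithin] with ε (hε : 0 < ε)
  have hpos (t : ℝ) : 0 < t ^ 2 + ε := by positivity
  have hφ : ContDiff ℝ 1 fun t : ℝ => log (t ^ 2 + ε) :=
    ((contDiff_id.pow 2).add contDiff_const).log fun t => (hpos t).ne'
  have hderiv (t : ℝ) : deriv (fun t : ℝ => log (t ^ 2 + ε)) t ^ 2 * (t ^ 2 + ε) ≤ 4 := by
    have := ((hasDerivAt_pow 2 t).add_const ε).log (hpos t).ne'
    rw [this.deriv, div_pow, div_mul_eq_mul_div, div_le_iff₀ (by have := hpos t; positivity)]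
    have := hpos t
    simp only [Nat.cast_ofNat, Nat.add_one_sub_one, pow_one]
    nlinarith
  calc entropy μ (fun x => f x ^ 2 + ε) = entropy μ fun x => exp (log (f x ^ 2 + ε)) := by
        simp only [exp_log (hpos _)]
    _ ≤ (2 * κ)⁻¹ * ∫ x, deriv (fun t => log (t ^ 2 + ε)) (f x) ^ 2 * gradSq f x *
          exp (log (f x ^ 2 + ε)) ∂μ := hμ.entropy_exp_comp_le hκ hf hc hφ
    _ ≤ (2 * κ)⁻¹ * ∫ x, 4 * gradSq f x ∂μ := by
        gcongr ?_ * ?_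
        refine integral_mono_of_nonneg (ae_of_all _ fun x => ?_)
          ((integrable_gradSq hf hc).const_mul 4) (ae_of_all _ fun x => ?_)
        · have := gradSq_nonneg f x
          positivity
        · simp only [exp_log (hpos _), mul_right_comm _ (gradSq f x)]
          exact mul_le_mul_of_nonneg_right (hderiv _) (gradSq_nonneg f x)
    _ = 2 / κ * ∫ x, gradSq f x ∂μ := by
        rw [integral_const_mul]
        field_simp
        norm_num

end LogSobolev

section MeasureComparison

variable {α : Type*} [MeasurableSpace α] {μ ν : Measure α} {a : ℝ}

lemma one_le_of_le_ofReal_smul [IsProbabilityMeasure μ] [IsProbabilityMeasure ν]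
    (h : ν ≤ ENNReal.ofReal a • μ) : 1 ≤ a := by
  simpa using h univ

lemma integral_le_mul_integral_of_le_ofReal_smul (ha : 0 ≤ a) (h : ν ≤ ENNReal.ofReal a • μ)
    {g : α → ℝ} (hg₀ : ∀ x, 0 ≤ g x) (hg : Integrable g μ) :
    ∫ x, g x ∂ν ≤ a * ∫ x, g x ∂μ := by
  calc ∫ x, g x ∂ν ≤ ∫ x, g x ∂(ENNReal.ofReal a • μ) :=
        integral_mono_measure h (ae_of_all _ hg₀) (hg.smul_measure ENNReal.ofReal_ne_top)
    _ = a * ∫ x, g x ∂μ := by rw [integral_smul_measure, ENNReal.toReal_ofReal ha, smul_eq_mul]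

lemma mul_klFun_div {c : ℝ} (hc : 0 < c) (t : ℝ) :
    c * klFun (t / c) = t * log t - t * log c + c - t := by
  rcases eq_or_ne t 0 with rfl | ht
  · simp [klFun_zero]
  · rw [klFun, log_div ht hc.ne']
    field_simp

end MeasureComparison

section HolleyStroock

variable {d : ℕ} {μ ν : Measure (EuclideanSpace ℝ (Fin d))} [IsProbabilityMeasure μ]
  [IsProbabilityMeasure ν] {a b C : ℝ}

lemma integral_mul_klFun_div {g : EuclideanSpace ℝ (Fin d) → ℝ} (hg : Integrable g μ)
    (hglog : Integrable (fun x => g x * log (g x)) μ) {c : ℝ} (hc : 0 < c) :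
    ∫ x, c * klFun (g x / c) ∂μ = entropy μ g + c * klFun ((∫ x, g x ∂μ) / c) := by
  simp only [mul_klFun_div hc]
  rw [integral_sub, integral_add, integral_sub hglog (hg.mul_const _), integral_mul_const,
    integral_const, probReal_univ, entropy]
  · simp only [smul_eq_mul]
    ring
  all_goals fun_prop

-- `∫ c * klFun (g / c)` has a nonnegative integrand, so it is monotone in the measure, and its
-- infimum over `c` is the entropy, attained at `c = ∫ g`.
theorem entropy_le_mul_entropy_of_le_ofReal_smul (h : ν ≤ ENNReal.ofReal a • μ)
    {g : EuclideanSpace ℝ (Fin d) → ℝ} (hg₀ : ∀ x, 0 ≤ g x) (hg : Integrable g μ)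
    (hglog : Integrable (fun x => g x * log (g x)) μ) : entropy ν g ≤ a * entropy μ g := by
  have ha : 1 ≤ a := one_le_of_le_ofReal_smul h
  have hklFun_nonneg {t c : ℝ} (ht : 0 ≤ t) (hc : 0 < c) : 0 ≤ c * klFun (t / c) :=
    mul_nonneg hc.le (klFun_nonneg (by positivity))
  have hcompare {c : ℝ} (hc : 0 < c) :
      entropy ν g ≤ a * (entropy μ g + c * klFun ((∫ x, g x ∂μ) / c)) := by
    have hklFun : Integrable (fun x => c * klFun (g x / c)) μ := by
      simp only [mul_klFun_div hc]
      fun_prop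
    calc entropy ν g ≤ entropy ν g + c * klFun ((∫ x, g x ∂ν) / c) :=
          le_add_of_nonneg_right (hklFun_nonneg (integral_nonneg hg₀) hc)
      _ = ∫ x, c * klFun (g x / c) ∂ν :=
          (integral_mul_klFun_div (hg.of_measure_le_smul ENNReal.ofReal_ne_top h)
            (hglog.of_measure_le_smul ENNReal.ofReal_ne_top h) hc).symm
      _ ≤ a * ∫ x, c * klFun (g x / c) ∂μ :=
          integral_le_mul_integral_of_le_ofReal_smul (by linarith) h
            (fun x => hklFun_nonneg (hg₀ x) hc) hklFun
      _ = a * (entropy μ g + c * klFun ((∫ x, g x ∂μ) / c)) := by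
          rw [integral_mul_klFun_div hg hglog hc]
  have hm₀ : 0 ≤ ∫ x, g x ∂μ := integral_nonneg hg₀
  rcases hm₀.eq_or_lt with hm | hm
  · refine le_of_forall_pos_le_add fun ε hε => (hcompare (c := ε / a) (by positivity)).trans_eq ?_
    rw [← hm]
    simp only [zero_div, klFun_zero]
    field_simp
  · simpa [div_self hm.ne', klFun_one] using hcompare hm

theorem LogSobolev.of_le_ofReal_smul (hμ : LogSobolev μ C) (hC : 0 ≤ C)
    (hνμ : ν ≤ ENNReal.ofReal a • μ) (hμν : μ ≤ ENNReal.ofReal b • ν) :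
    LogSobolev ν (a * b * C) := by
  intro f hf hc
  have ha : 1 ≤ a := one_le_of_le_ofReal_smul hνμ
  have hb : 1 ≤ b := one_le_of_le_ofReal_smul hμν
  have hsq : Continuous fun x => f x ^ 2 := by have := hf.continuous; fun_prop
  have hsqc : HasCompactSupport fun x => f x ^ 2 := hc.comp_left (g := (· ^ 2)) (by simp)
  have hsq_log : Integrable (fun x => f x ^ 2 * log (f x ^ 2)) μ :=
    (continuous_mul_log.comp hsq).integrable_of_hasCompactSupport
      (hsqc.comp_left (g := fun t => t * log t) (by simp))
  calc entropy ν (fun x => f x ^ 2) ≤ a * entropy μ fun x => f x ^ 2 :=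
        entropy_le_mul_entropy_of_le_ofReal_smul hνμ (fun x => sq_nonneg _)
          (hsq.integrable_of_hasCompactSupport hsqc) hsq_log
    _ ≤ a * (C * ∫ x, gradSq f x ∂μ) := by gcongr; exact hμ hf hc
    _ ≤ a * (C * (b * ∫ x, gradSq f x ∂ν)) := by
        gcongr
        exact integral_le_mul_integral_of_le_ofReal_smul (by linarith) hμν (gradSq_nonneg f)
          (integrable_gradSq hf hc)
    _ = a * b * C * ∫ x, gradSq f x ∂ν := by ring

end HolleyStroock

section StrongConvexity

variable {E : Type*} [NormedAddCommGroup E] [InnerProductSpace ℝ E] [FiniteDimensional ℝ E]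
  {W : E → ℝ} {κ : ℝ}

lemma continuous_of_strongConvexOn_univ (hW : StrongConvexOn univ κ W) : Continuous W := by
  have hconv := strongConvexOn_iff_convex.1 hW
  have hcont : Continuous fun x => W x - κ / 2 * ‖x‖ ^ 2 :=
    continuousOn_univ.1 (hconv.continuousOn isOpen_univ)
  simpa using hcont.fun_add (by fun_prop : Continuous fun x : E => κ / 2 * ‖x‖ ^ 2)

lemma integrable_exp_neg_of_strongConvexOn_univ [MeasurableSpace E] [BorelSpace E] (hκ : 0 < κ)
    (hW : StrongConvexOn univ κ W) : Integrable fun x => exp (-W x) := by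
  have hconv := strongConvexOn_iff_convex.1 hW
  have hcont := continuous_of_strongConvexOn_univ hW
  obtain ⟨l, c, hlc, -⟩ := hconv.exists_affine_le_of_lt (𝕜 := ℝ) (mem_univ (0 : E))
    (sub_one_lt _) isClosed_univ
    (by fun_prop : Continuous fun x => W x - κ / 2 * ‖x‖ ^ 2).continuousOn.lowerSemicontinuousOn
  have hbelow (x : E) : l x + c ≤ W x - κ / 2 * ‖x‖ ^ 2 := hlc ⟨x, mem_univ x⟩
  have hgauss := (GaussianFourier.integrable_cexp_neg_mul_sq_norm_add (V := E) (b := (κ / 2 : ℝ))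
    (by simpa using hκ) (-1) ((InnerProductSpace.toDual ℝ E).symm l)).norm.const_mul (exp (-c))
  refine hgauss.mono' (by fun_prop) (ae_of_all _ fun x => ?_)
  rw [Real.norm_of_nonneg (exp_nonneg _), Complex.norm_exp, ← exp_add,
    InnerProductSpace.toDual_symm_apply]
  have hre : (-((κ / 2 : ℝ) : ℂ) * (‖x‖ : ℂ) ^ 2 + -1 * (l x : ℂ)).re =
      -(κ / 2 * ‖x‖ ^ 2) - l x := by
    norm_cast
    push_cast
    ring
  rw [hre]
  gcongr
  linarith [hbelow x]

end StrongConvexity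

section Gibbs

variable {d : ℕ} {V W : EuclideanSpace ℝ (Fin d) → ℝ} {κ c C : ℝ}

lemma gibbs_eq_tilted (hV : Integrable fun x => exp (-V x)) :
    gibbs V = volume.tilted fun x => -V x := by
  have hZ : 0 < ∫ x, exp (-V x) := integral_exp_pos hV
  have hlint : ∫⁻ x, ENNReal.ofReal (exp (-V x)) = ENNReal.ofReal (∫ x, exp (-V x)) :=
    (ofReal_integral_eq_lintegral_ofReal hV (ae_of_all _ fun x => exp_nonneg _)).symm
  rw [gibbs, Measure.tilted, hlint, ← withDensity_smul' _ _ (by simpa using hZ)]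
  congr with x
  rw [ENNReal.ofReal_div_of_pos hZ, Pi.smul_apply, smul_eq_mul, div_eq_mul_inv, mul_comm]

lemma isProbabilityMeasure_gibbs (hV : Integrable fun x => exp (-V x)) :
    IsProbabilityMeasure (gibbs V) := by
  rw [gibbs_eq_tilted hV]
  exact isProbabilityMeasure_tilted hV

lemma gibbs_le_ofReal_smul_gibbs (hV : Integrable fun x => exp (-V x))
    (hW : Integrable fun x => exp (-W x)) (hWV : ∀ x, W x ≤ V x + c) :
    gibbs V ≤ ENNReal.ofReal (exp c * ((∫ x, exp (-W x)) / ∫ x, exp (-V x))) • gibbs W := by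
  have hZV : 0 < ∫ x, exp (-V x) := integral_exp_pos hV
  have hZW : 0 < ∫ x, exp (-W x) := integral_exp_pos hW
  rw [gibbs_eq_tilted hV, gibbs_eq_tilted hW, Measure.tilted, Measure.tilted,
    ← withDensity_smul' _ _ ENNReal.ofReal_ne_top]
  refine withDensity_mono (ae_of_all _ fun x => ?_)
  rw [Pi.smul_apply, smul_eq_mul, ← ENNReal.ofReal_mul (by positivity)]
  refine ENNReal.ofReal_le_ofReal ?_
  calc exp (-V x) / ∫ x, exp (-V x) ≤ exp (c + -W x) / ∫ x, exp (-V x) := by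
        gcongr
        linarith [hWV x]
    _ = exp c * ((∫ x, exp (-W x)) / ∫ x, exp (-V x)) * (exp (-W x) / ∫ x, exp (-W x)) := by
        rw [exp_add]
        field_simp

theorem logSobolev_gibbs_of_strongConvexOn (hκ : 0 < κ) (hW : StrongConvexOn univ κ W) :
    LogSobolev (gibbs W) (2 / κ) := by
  have := isProbabilityMeasure_gibbs (integrable_exp_neg_of_strongConvexOn_univ hκ hW)
  refine IsStrongPrekopaLeindler.logSobolev ?_ hκ
  rw [gibbs, ← withDensity_smul_measure]
  exact ((isPrekopaLeindler_addHaar volume).smul _).withDensity_exp_neg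
    (continuous_of_strongConvexOn_univ hW).measurable hW

theorem LogSobolev.gibbs_of_le_of_le_add (hW : LogSobolev (gibbs W) C) (hC : 0 ≤ C)
    (hWi : Integrable fun x => exp (-W x)) (hV : Measurable V) (hVW : ∀ x, V x ≤ W x)
    (hWV : ∀ x, W x ≤ V x + c) : LogSobolev (gibbs V) (exp c * C) := by
  have hVi : Integrable fun x => exp (-V x) := by
    refine (hWi.const_mul (exp c)).mono' (by fun_prop) (ae_of_all _ fun x => ?_)
    rw [Real.norm_of_nonneg (exp_nonneg _), ← exp_add]
    gcongr
    linarith [hWV x]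
  have := isProbabilityMeasure_gibbs hVi
  have := isProbabilityMeasure_gibbs hWi
  have hZV : 0 < ∫ x, exp (-V x) := integral_exp_pos hVi
  have hZW : 0 < ∫ x, exp (-W x) := integral_exp_pos hWi
  convert hW.of_le_ofReal_smul hC (gibbs_le_ofReal_smul_gibbs hVi hWi hWV)
    (gibbs_le_ofReal_smul_gibbs (c := 0) hWi hVi (by simpa using hVW)) using 1
  rw [exp_zero]
  field_simp

end Gibbs

section Quartic

/-- A `κ`-strongly convex modification of the quartic potential `‖x‖⁴ / 4`: it agrees with the
quartic up to the constant `κ² / 4` outside the ball `‖x‖² ≤ κ`, where the quartic has Hessian at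
least `κ`, and is exactly quadratic inside. -/
noncomputable def convexifiedQuartic (E : Type*) [NormedAddCommGroup E] (κ : ℝ) (x : E) : ℝ :=
  κ / 2 * ‖x‖ ^ 2 + max (‖x‖ ^ 2 - κ) 0 ^ 2 / 4

variable {E : Type*} [NormedAddCommGroup E] {κ : ℝ}

lemma strongConvexOn_convexifiedQuartic [InnerProductSpace ℝ E] (κ : ℝ) :
    StrongConvexOn univ κ (convexifiedQuartic E κ) := by
  rw [strongConvexOn_iff_convex]
  have hsq : ConvexOn ℝ univ fun x : E => ‖x‖ ^ 2 :=
    convexOn_univ_norm.pow (fun _ _ => norm_nonneg _) 2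
  have hmax : ConvexOn ℝ univ fun x : E => max (‖x‖ ^ 2 - κ) 0 :=
    (hsq.sub (concaveOn_const κ convex_univ)).sup (convexOn_const 0 convex_univ)
  refine ((hmax.pow (fun _ _ => le_max_right _ _) 2).smul (by norm_num : (0 : ℝ) ≤ 1 / 4)).congr
    fun x _ => ?_
  simp only [convexifiedQuartic, Pi.pow_apply, smul_eq_mul]
  ring

lemma quartic_le_convexifiedQuartic (hκ : 0 ≤ κ) (x : E) :
    ‖x‖ ^ 4 / 4 ≤ convexifiedQuartic E κ x := by
  rw [convexifiedQuartic]
  rcases max_cases (‖x‖ ^ 2 - κ) 0 with ⟨h, _⟩ | ⟨h, hx⟩ <;> rw [h]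
  · linarith [sq_nonneg κ]
  · nlinarith [sq_nonneg ‖x‖]

lemma convexifiedQuartic_le_quartic_add (κ : ℝ) (x : E) :
    convexifiedQuartic E κ x ≤ ‖x‖ ^ 4 / 4 + κ ^ 2 / 4 := by
  rw [convexifiedQuartic]
  rcases max_choice (‖x‖ ^ 2 - κ) 0 with h | h <;> rw [h] <;>
    nlinarith [sq_nonneg (‖x‖ ^ 2 - κ)]

theorem logSobolev_gibbs_quartic (d : ℕ) (hκ : 0 < κ) :
    LogSobolev (gibbs fun x : EuclideanSpace ℝ (Fin d) => ‖x‖ ^ 4 / 4)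
      (exp (κ ^ 2 / 4) * (2 / κ)) :=
  have hconv := strongConvexOn_convexifiedQuartic κ
  (logSobolev_gibbs_of_strongConvexOn hκ hconv).gibbs_of_le_of_le_add (by positivity)
    (integrable_exp_neg_of_strongConvexOn_univ hκ hconv) (by fun_prop)
    (quartic_le_convexifiedQuartic hκ.le) (convexifiedQuartic_le_quartic_add κ)

end Quartic

theorem lsi_quartic_general {d : ℕ} {f : EuclideanSpace ℝ (Fin d) → ℝ} (hf : ContDiff ℝ 1 f)
    (hc : HasCompactSupport f) :
    entropy (gibbs fun x => ‖x‖ ^ 4 / 4) (fun x => f x ^ 2) ≤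
      √2 * exp (1 / 2) * ∫ x, gradSq f x ∂(gibbs fun x => ‖x‖ ^ 4 / 4) := by
  -- `κ = √2` minimises the constant `2 / κ * exp (κ² / 4)`.
  convert logSobolev_gibbs_quartic d (κ := √2) (by positivity) hf hc using 2
  rw [div_sqrt, sq_sqrt zero_le_two, mul_comm]
  norm_num

lemma sqrt_two_mul_exp_half_le : √2 * exp (1 / 2) ≤ 3 * √3 * exp 1 := by
  have hsqrt : √2 ≤ √3 := sqrt_le_sqrt (by norm_num)
  gcongr
  · linarith [sqrt_nonneg 3]
  · norm_num

/-- Dimension-free logarithmic Sobolev inequality for the quartic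
(Subbotin) measure `μ(dx) ∝ exp(-|x|⁴/4) dx`: `Ent_μ(f²) ≤ 3√3·e ∫ |∇f|² dμ`. -/
theorem lsi_quartic {d : ℕ} (hd : 1 ≤ d) :
    ∀ f : EuclideanSpace ℝ (Fin d) → ℝ, ContDiff ℝ (⊤ : ℕ∞) f → HasCompactSupport f →
      entropy (gibbs fun x => ‖x‖ ^ 4 / 4) (fun x => f x ^ 2) ≤
        3 * Real.sqrt 3 * Real.exp 1 *
          ∫ x, gradSq f x ∂(gibbs fun x => ‖x‖ ^ 4 / 4) := by
  intro f hf hc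
  exact (lsi_quartic_general (hf.of_le (mod_cast le_top)) hc).trans
    (mul_le_mul_of_nonneg_right sqrt_two_mul_exp_half_le (integral_nonneg (gradSq_nonneg f)))
end

section
/- Let d ≥ 1, ε > 0, V(x) = |x|⁴/4 on ℝ^d, so that Lg(x) = Δg(x) − |x|² x·∇g(x), and let a(x) = exp((ε/2)·arctan(|x|²)). Then for every x ∈ ℝ^d, −a(x)·L(a^{−1})(x) = ε(d + |x|⁴(d−4))/(1+|x|⁴)² − ε|x|⁴/(1+|x|⁴) − ε²|x|²/(1+|x|⁴)². -/
open Real MeasureTheory Finset Matrix Set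

/-!
`L` is a diffusion operator, so it satisfies the chain rule `L (φ ∘ f) = φ'(f) L f + φ''(f) |∇f|²`.
Writing `a = exp W`, the chain rule for `t ↦ exp (-t)` gives `-a L(a⁻¹) = L W - |∇W|²`. Here `W` is
`(ε/2) arctan` of `|x|²`, so a second use of the chain rule reduces everything to
`L |x|² = 2d - 2|x|⁴` and `|∇|x|²|² = 4|x|²`.
-/

open scoped Topology

section ChainRule

variable {d : ℕ} {f : EuclideanSpace ℝ (Fin d) → ℝ} {x : EuclideanSpace ℝ (Fin d)}

lemma pd_mul {g : EuclideanSpace ℝ (Fin d) → ℝ} (i : Fin d)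
    (hf : DifferentiableAt ℝ f x) (hg : DifferentiableAt ℝ g x) :
    pd i (fun y => f y * g y) x = f x * pd i g x + g x * pd i f x := by
  simp only [pd, fderiv_fun_mul hf hg, _root_.add_apply, _root_.smul_apply, smul_eq_mul]

lemma pd_comp {φ : ℝ → ℝ} {φ' : ℝ} (i : Fin d) (hφ : HasDerivAt φ φ' (f x))
    (hf : DifferentiableAt ℝ f x) :
    pd i (fun y => φ (f y)) x = φ' * pd i f x :=
  DFunLike.congr_fun (hφ.comp_hasFDerivAt x hf.hasFDerivAt).fderiv _

lemma differentiableAt_pd (i : Fin d) (hf : ContDiffAt ℝ 2 f x) :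
    DifferentiableAt ℝ (pd i f) x :=
  ((hf.fderiv_right (m := 1) (by norm_num)).differentiableAt one_ne_zero).clm_apply
    (differentiableAt_const _)

lemma gradSq_comp {φ : ℝ → ℝ} {φ' : ℝ} (hφ : HasDerivAt φ φ' (f x))
    (hf : DifferentiableAt ℝ f x) :
    gradSq (fun y => φ (f y)) x = φ' ^ 2 * gradSq f x := by
  simp only [gradSq, pd_comp _ hφ hf, mul_pow, Finset.mul_sum]

lemma pd_pd_comp {φ φ' : ℝ → ℝ} {φ'' : ℝ} (i : Fin d)
    (hφ : ∀ᶠ t in 𝓝 (f x), HasDerivAt φ (φ' t) t) (hφ' : HasDerivAt φ' φ'' (f x))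
    (hf : ContDiffAt ℝ 2 f x) :
    pd i (pd i fun y => φ (f y)) x = φ' (f x) * pd i (pd i f) x + φ'' * pd i f x ^ 2 := by
  have hfx : DifferentiableAt ℝ f x := hf.differentiableAt two_ne_zero
  have hcomp : DifferentiableAt ℝ (fun y => φ' (f y)) x := hφ'.differentiableAt.comp x hfx
  have hpd : (pd i fun y => φ (f y)) =ᶠ[𝓝 x] fun y => φ' (f y) * pd i f y := by
    filter_upwards [hf.continuousAt.eventually hφ, hf.eventually (by simp)] with y hφy hfy
    exact pd_comp i hφy (hfy.differentiableAt two_ne_zero)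
  calc pd i (pd i fun y => φ (f y)) x
      = pd i (fun y => φ' (f y) * pd i f y) x := DFunLike.congr_fun hpd.fderiv_eq _
    _ = φ' (f x) * pd i (pd i f) x + pd i f x * (φ'' * pd i f x) := by
        rw [pd_mul i hcomp (differentiableAt_pd i hf), pd_comp i hφ' hfx]
    _ = φ' (f x) * pd i (pd i f) x + φ'' * pd i f x ^ 2 := by ring

lemma lap_comp {φ φ' : ℝ → ℝ} {φ'' : ℝ}
    (hφ : ∀ᶠ t in 𝓝 (f x), HasDerivAt φ (φ' t) t) (hφ' : HasDerivAt φ' φ'' (f x))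
    (hf : ContDiffAt ℝ 2 f x) :
    lap (fun y => φ (f y)) x = φ' (f x) * lap f x + φ'' * gradSq f x := by
  simp only [lap, gradSq, pd_pd_comp _ hφ hφ' hf, Finset.sum_add_distrib, Finset.mul_sum]

lemma diffOp_comp (V : EuclideanSpace ℝ (Fin d) → ℝ) {φ φ' : ℝ → ℝ} {φ'' : ℝ}
    (hφ : ∀ᶠ t in 𝓝 (f x), HasDerivAt φ (φ' t) t) (hφ' : HasDerivAt φ' φ'' (f x))
    (hf : ContDiffAt ℝ 2 f x) :
    diffOp V (fun y => φ (f y)) x = φ' (f x) * diffOp V f x + φ'' * gradSq f x := by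
  have hdrift : ∑ i, pd i V x * pd i (fun y => φ (f y)) x
      = φ' (f x) * ∑ i, pd i V x * pd i f x := by
    simp only [pd_comp _ hφ.self_of_nhds (hf.differentiableAt two_ne_zero), Finset.mul_sum,
      mul_left_comm]
  rw [diffOp, diffOp, lap_comp hφ hφ' hf, hdrift]
  ring

lemma neg_exp_mul_diffOp_inv_exp (V : EuclideanSpace ℝ (Fin d) → ℝ) (hf : ContDiffAt ℝ 2 f x) :
    -(Real.exp (f x) * diffOp V (fun y => (Real.exp (f y))⁻¹) x)
      = diffOp V f x - gradSq f x := by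
  have hexp (t : ℝ) : HasDerivAt (fun t => Real.exp (-t)) (-Real.exp (-t)) t := by
    simpa using (hasDerivAt_neg t).exp
  have hexp' : HasDerivAt (fun t => -Real.exp (-t)) (Real.exp (-f x)) (f x) := by
    simpa using (hexp (f x)).fun_neg
  have hcancel : Real.exp (f x) * Real.exp (-f x) = 1 := by rw [← Real.exp_add]; simp
  simp only [← Real.exp_neg]
  rw [diffOp_comp V (.of_forall hexp) hexp' hf]
  linear_combination (diffOp V f x - gradSq f x) * hcancel

end ChainRule

section NormSq

variable {d : ℕ} (x : EuclideanSpace ℝ (Fin d))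

lemma pd_norm_sq (i : Fin d) : pd i (fun y => ‖y‖ ^ 2) x = 2 * x i := by
  simp [pd, fderiv_norm_sq_apply, EuclideanSpace.inner_single_right]

lemma pd_coord (i : Fin d) : pd i (fun y => y i) x = 1 := by
  have hcoord : HasFDerivAt (fun y : EuclideanSpace ℝ (Fin d) => y i)
      (EuclideanSpace.proj i : EuclideanSpace ℝ (Fin d) →L[ℝ] ℝ) x :=
    (EuclideanSpace.proj i : EuclideanSpace ℝ (Fin d) →L[ℝ] ℝ).hasFDerivAt
  simp [pd, hcoord.fderiv]

lemma gradSq_norm_sq : gradSq (fun y => ‖y‖ ^ 2) x = 4 * ‖x‖ ^ 2 := by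
  simp only [gradSq, pd_norm_sq, mul_pow, ← Finset.mul_sum]
  rw [EuclideanSpace.real_norm_sq_eq]
  norm_num

lemma lap_norm_sq : lap (fun y => ‖y‖ ^ 2) x = 2 * d := by
  have hpd (i : Fin d) : pd i (fun y => 2 * y i) x = 2 := by
    rw [pd_comp i (hasDerivAt_const_mul 2) (by fun_prop), pd_coord, mul_one]
  simp [lap, pd_norm_sq, hpd, mul_comm]

lemma diffOp_radial_norm_sq {U : ℝ → ℝ} {U' : ℝ} (hU : HasDerivAt U U' (‖x‖ ^ 2)) :
    diffOp (fun y => U (‖y‖ ^ 2)) (fun y => ‖y‖ ^ 2) x = 2 * d - 4 * U' * ‖x‖ ^ 2 := by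
  have hdrift : ∑ i, pd i (fun y => U (‖y‖ ^ 2)) x * pd i (fun y => ‖y‖ ^ 2) x
      = U' * gradSq (fun y => ‖y‖ ^ 2) x := by
    simp only [gradSq, Finset.mul_sum, sq (pd _ _ x), ← mul_assoc,
      pd_comp (f := fun y => ‖y‖ ^ 2) _ hU (differentiableAt_id.norm_sq ℝ)]
  rw [diffOp, lap_norm_sq, hdrift, gradSq_norm_sq]
  ring

lemma diffOp_quartic_norm_sq :
    diffOp (fun y => ‖y‖ ^ 4 / 4) (fun y => ‖y‖ ^ 2) x = 2 * d - 2 * ‖x‖ ^ 4 := by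
  have hU : HasDerivAt (fun s : ℝ => s ^ 2 / 4) (2 * ‖x‖ ^ 2 / 4) (‖x‖ ^ 2) := by
    simpa using (hasDerivAt_pow 2 (‖x‖ ^ 2)).div_const 4
  have hL := diffOp_radial_norm_sq x hU
  simp only [← pow_mul, Nat.reduceMul] at hL
  rw [hL]
  ring

end NormSq

lemma hasDerivAt_const_mul_inv_one_add_sq (c t : ℝ) :
    HasDerivAt (fun s => c * (1 + s ^ 2)⁻¹) (-(2 * c * t) / (1 + t ^ 2) ^ 2) t := by
  have hden : HasDerivAt (fun s : ℝ => 1 + s ^ 2) (2 * t) t := by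
    simpa using (hasDerivAt_pow 2 t).const_add 1
  exact ((hden.fun_inv (by positivity)).const_mul c).congr_deriv (by ring)

/-- Explicit computation of `-a L(a⁻¹)` for the quartic potential
`V(x) = |x|⁴/4` and the perturbation `a(x) = exp((ε/2) arctan(|x|²))`. -/
theorem arctan_perturbation {d : ℕ} (hd : 1 ≤ d) (ε : ℝ) (hε : 0 < ε)
    (x : EuclideanSpace ℝ (Fin d)) :
    -(Real.exp (ε / 2 * Real.arctan (‖x‖ ^ 2)) *
        diffOp (fun y => ‖y‖ ^ 4 / 4)
          (fun y => (Real.exp (ε / 2 * Real.arctan (‖y‖ ^ 2)))⁻¹) x) =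
      ε * ((d : ℝ) + ‖x‖ ^ 4 * ((d : ℝ) - 4)) / (1 + ‖x‖ ^ 4) ^ 2 -
        ε * ‖x‖ ^ 4 / (1 + ‖x‖ ^ 4) -
        ε ^ 2 * ‖x‖ ^ 2 / (1 + ‖x‖ ^ 4) ^ 2 := by
  have hnorm : ContDiffAt ℝ 2 (fun y : EuclideanSpace ℝ (Fin d) => ‖y‖ ^ 2) x :=
    contDiffAt_id.norm_sq ℝ
  have harctan (t : ℝ) :
      HasDerivAt (fun s => ε / 2 * Real.arctan s) (ε / 2 * (1 + t ^ 2)⁻¹) t := by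
    simpa using (Real.hasDerivAt_arctan t).const_mul (ε / 2)
  have hW : ContDiffAt ℝ 2
      (fun y : EuclideanSpace ℝ (Fin d) => ε / 2 * Real.arctan (‖y‖ ^ 2)) x :=
    contDiffAt_const.mul hnorm.arctan
  rw [neg_exp_mul_diffOp_inv_exp _ hW,
    diffOp_comp _ (.of_forall harctan) (hasDerivAt_const_mul_inv_one_add_sq (ε / 2) _) hnorm,
    gradSq_comp (harctan _) (hnorm.differentiableAt two_ne_zero),
    diffOp_quartic_norm_sq, gradSq_norm_sq]
  field_simp
  ring
end

section
/- Let d ≥ 1 be an integer and let ε be a real number with 0 < ε ≤ 8/(3√3(d+1)). Then for every real t ≥ 0 one has 2t⁴ − ε(d+1)t³ + 4t² − ε(d+5)t + 2 − ε² ≥ 0. -/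
open Real MeasureTheory Finset Matrix Set

/-!
The quartic equals `2 (t² + 1)² - a t (t² + 1) - 4 ε t - ε²` with `a = ε (d + 1)`. For `t ≥ 0` it
decreases in both `a ≥ 0` and `ε ≥ 0`. The bound on `ε` says that `a ≤ 8 / (3√3)`, and then
`d ≥ 1` gives `ε ≤ 4 / (3√3)`. When both are equalities the quartic has a double root at
`t = 1 / √3`, and its other quadratic factor is positive.
-/

/-- The quartic `2 t⁴ - a t³ + 4 t² - (a + 4 ε) t + 2 - ε²`, written in powers of `t² + 1`. Taking
`a` as a parameter independent of `ε` (it stands for `ε (d + 1)`) lets the two vary separately. -/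
noncomputable def quartic (a ε t : ℝ) : ℝ :=
  2 * (t ^ 2 + 1) ^ 2 - a * (t * (t ^ 2 + 1)) - 4 * (ε * t) - ε ^ 2

theorem quartic_abs_le_quartic {a A ε E : ℝ} (ha : |a| ≤ A) (hε : |ε| ≤ E) (t : ℝ) :
    quartic A E |t| ≤ quartic a ε t := by
  have cubic_term : a * (t * (t ^ 2 + 1)) ≤ A * (|t| * (t ^ 2 + 1)) := calc
    a * (t * (t ^ 2 + 1)) ≤ |a * (t * (t ^ 2 + 1))| := le_abs_self _
    _ = |a| * (|t| * (t ^ 2 + 1)) := by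
      rw [abs_mul, abs_mul, abs_of_pos (by positivity : 0 < t ^ 2 + 1)]
    _ ≤ A * (|t| * (t ^ 2 + 1)) := by gcongr
  have linear_term : ε * t ≤ E * |t| := calc
    ε * t ≤ |ε * t| := le_abs_self _
    _ = |ε| * |t| := abs_mul ε t
    _ ≤ E * |t| := by gcongr
  have constant_term : ε ^ 2 ≤ E ^ 2 := sq_le_sq.2 (hε.trans (le_abs_self E))
  unfold quartic
  rw [sq_abs]
  linarith

theorem quartic_extremal_eq (t : ℝ) :
    quartic (8 / (3 * √3)) (4 / (3 * √3)) t =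
      2 / 27 * (√3 * t - 1) ^ 2 * ((√3 * t + 1) ^ 2 + 6 * t ^ 2 + 18) := by
  have sq_sqrt_three : √3 ^ 2 = 3 := Real.sq_sqrt (by norm_num)
  unfold quartic
  field_simp
  grind

theorem quartic_extremal_nonneg (t : ℝ) : 0 ≤ quartic (8 / (3 * √3)) (4 / (3 * √3)) t := by
  rw [quartic_extremal_eq]
  positivity

theorem quartic_nonneg {a ε : ℝ} (ha : |a| ≤ 8 / (3 * √3)) (hε : |ε| ≤ 4 / (3 * √3)) (t : ℝ) :
    0 ≤ quartic a ε t :=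
  (quartic_extremal_nonneg |t|).trans (quartic_abs_le_quartic ha hε t)

theorem quartic_poly_nonneg_general {d ε : ℝ} (hd : 1 ≤ d)
    (hε : |ε| ≤ 8 / (3 * √3 * (d + 1))) (t : ℝ) :
    0 ≤ 2 * t ^ 4 - ε * (d + 1) * t ^ 3 + 4 * t ^ 2 - ε * (d + 5) * t + 2 - ε ^ 2 := by
  have d_add_one_pos : 0 < d + 1 := by linarith
  have cubic_bound : |ε * (d + 1)| ≤ 8 / (3 * √3) := by
    rwa [abs_mul, abs_of_pos d_add_one_pos, ← le_div_iff₀ d_add_one_pos, div_div]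
  have linear_bound : |ε| ≤ 4 / (3 * √3) := calc
    |ε| ≤ 8 / (3 * √3 * (d + 1)) := hε
    _ ≤ 8 / (3 * √3 * (1 + 1)) := by gcongr
    _ = 4 / (3 * √3) := by ring
  calc
    0 ≤ quartic (ε * (d + 1)) ε t := quartic_nonneg cubic_bound linear_bound t
    _ = _ := by unfold quartic; ring

/-- For `0 < ε ≤ 8/(3√3(d+1))`, the quartic
`2t⁴ - ε(d+1)t³ + 4t² - ε(d+5)t + 2 - ε²` is nonnegative on `[0, ∞)`. -/
theorem quartic_poly_nonneg (d : ℕ) (hd : 1 ≤ d) (ε : ℝ) (hε : 0 < ε)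
    (hε' : ε ≤ 8 / (3 * Real.sqrt 3 * ((d : ℝ) + 1))) :
    ∀ t : ℝ, 0 ≤ t →
      0 ≤ 2 * t ^ 4 - ε * ((d : ℝ) + 1) * t ^ 3 + 4 * t ^ 2 - ε * ((d : ℝ) + 5) * t
            + 2 - ε ^ 2 := by
  intro t _
  refine quartic_poly_nonneg_general (by exact_mod_cast hd) ?_ t
  rwa [abs_of_pos hε]
end

section
/- Let d ≥ 1 be an integer and let ε be a real number with 0 < ε ≤ 8/(3√3(d+1)). Then the infimum over t ≥ 0 of the function t ↦ 2t + ε(d + t²(d−4))/(1+t²)² − εt²/(1+t²) − ε²t/(1+t²)² equals εd, and it is attained at t = 0. -/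
open Real MeasureTheory Finset Matrix Set

/-!
For `t ≥ 0`, the excess of the function over its value `ε d` at `0` is `t / (1 + t²)²` times
`2 (1 + t²)² - ε (d + 1) (t + t³) - 4 ε t - ε²`, which is smallest when `ε (d + 1)` and `ε` are as
large as possible. At the extremal values `ε (d + 1) = 8 / (3√3)`, `ε = 4 / (3√3)` this quartic has
a double root at `t = 1 / √3`, and the complementary quadratic factor is positive.
-/

/-- The function of `t` whose infimum over `t ≥ 0` is sought. The dimension `d` is taken real, since
it enters only as a coefficient. -/
noncomputable def kappaProfile (d ε t : ℝ) : ℝ :=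
  2 * t + ε * (d + t ^ 2 * (d - 4)) / (1 + t ^ 2) ^ 2 - ε * t ^ 2 / (1 + t ^ 2) -
    ε ^ 2 * t / (1 + t ^ 2) ^ 2

lemma kappaProfile_zero (d ε : ℝ) : kappaProfile d ε 0 = ε * d := by
  simp [kappaProfile]

lemma kappaProfile_sub_eq_mul_div (d ε t : ℝ) :
    kappaProfile d ε t - ε * d =
      t * (2 * (1 + t ^ 2) ^ 2 - (ε * (d + 1) * (t + t ^ 3) + 4 * ε * t + ε ^ 2)) /
        (1 + t ^ 2) ^ 2 := by
  have h_ne : 1 + t ^ 2 ≠ 0 := by positivity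
  rw [kappaProfile]
  field_simp
  ring

lemma extremal_quartic_eq_sq_mul {u : ℝ} (hu : 3 * u ^ 2 = 1) (t : ℝ) :
    2 * (1 + t ^ 2) ^ 2 - (8 * u / 3 * (t + t ^ 3) + 4 * (4 * u / 3) * t + (4 * u / 3) ^ 2) =
      (t - u) ^ 2 * (2 * (t + u / 3) ^ 2 + 112 / 27) := by
  linear_combination (4 / 27 * t ^ 2 - 8 / 27 * u * t - 2 / 27 * u ^ 2 - 2) * hu

lemma extremal_quartic_le (t : ℝ) :
    8 / (3 * √3) * (t + t ^ 3) + 4 * (4 / (3 * √3)) * t + (4 / (3 * √3)) ^ 2 ≤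
      2 * (1 + t ^ 2) ^ 2 := by
  have hu : 3 * (1 / √3) ^ 2 = 1 := by norm_num [div_pow]
  have h8 : 8 / (3 * √3) = 8 * (1 / √3) / 3 := by ring
  have h4 : 4 / (3 * √3) = 4 * (1 / √3) / 3 := by ring
  rw [h8, h4, ← sub_nonneg, extremal_quartic_eq_sq_mul hu]
  positivity

lemma quartic_le {c ε t : ℝ} (hc : c ≤ 8 / (3 * √3)) (hε : |ε| ≤ 4 / (3 * √3)) (ht : 0 ≤ t) :
    c * (t + t ^ 3) + 4 * ε * t + ε ^ 2 ≤ 2 * (1 + t ^ 2) ^ 2 :=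
  calc
    c * (t + t ^ 3) + 4 * ε * t + ε ^ 2 ≤ c * (t + t ^ 3) + 4 * |ε| * t + |ε| ^ 2 := by
      rw [sq_abs]
      gcongr
      exact le_abs_self ε
    _ ≤ 8 / (3 * √3) * (t + t ^ 3) + 4 * (4 / (3 * √3)) * t + (4 / (3 * √3)) ^ 2 := by gcongr
    _ ≤ 2 * (1 + t ^ 2) ^ 2 := extremal_quartic_le t

lemma isMinOn_kappaProfile_zero {d ε : ℝ} (hε : |ε| ≤ 4 / (3 * √3))
    (hdε : ε * (d + 1) ≤ 8 / (3 * √3)) : IsMinOn (kappaProfile d ε) (Set.Ici 0) 0 := by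
  refine isMinOn_iff.2 fun t (ht : 0 ≤ t) ↦ ?_
  rw [kappaProfile_zero, ← sub_nonneg, kappaProfile_sub_eq_mul_div]
  have h_quartic := sub_nonneg.2 (quartic_le hdε hε ht)
  positivity

theorem kappa_inf_quartic_general {d ε : ℝ} (hε : |ε| ≤ 4 / (3 * √3))
    (hdε : ε * (d + 1) ≤ 8 / (3 * √3)) :
    IsLeast (kappaProfile d ε '' Set.Ici 0) (ε * d) ∧ kappaProfile d ε 0 = ε * d := by
  have h0 := kappaProfile_zero d ε
  refine ⟨⟨⟨0, Set.self_mem_Ici, h0⟩, ?_⟩, h0⟩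
  exact Set.forall_mem_image.2 fun t ht ↦ h0 ▸ isMinOn_kappaProfile_zero hε hdε ht

lemma threshold_le_of_one_le {d : ℝ} (hd : 1 ≤ d) : 8 / (3 * √3 * (d + 1)) ≤ 4 / (3 * √3) :=
  calc
    8 / (3 * √3 * (d + 1)) ≤ 8 / (3 * √3 * 2) := by gcongr; linarith
    _ = 4 / (3 * √3) := by ring

/-- For `0 < ε ≤ 8/(3√3(d+1))`, the infimum over `t ≥ 0` of
`2t + ε(d + t²(d-4))/(1+t²)² - εt²/(1+t²) - ε²t/(1+t²)²` equals `εd`, attained at `t = 0`. -/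
theorem kappa_inf_quartic (d : ℕ) (hd : 1 ≤ d) (ε : ℝ) (hε : 0 < ε)
    (hε' : ε ≤ 8 / (3 * Real.sqrt 3 * ((d : ℝ) + 1))) :
    IsLeast
        ((fun t : ℝ => 2 * t + ε * ((d : ℝ) + t ^ 2 * ((d : ℝ) - 4)) / (1 + t ^ 2) ^ 2 -
            ε * t ^ 2 / (1 + t ^ 2) - ε ^ 2 * t / (1 + t ^ 2) ^ 2) '' Set.Ici 0)
        (ε * d) ∧
      2 * (0 : ℝ) + ε * ((d : ℝ) + (0 : ℝ) ^ 2 * ((d : ℝ) - 4)) / (1 + (0 : ℝ) ^ 2) ^ 2 -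
          ε * (0 : ℝ) ^ 2 / (1 + (0 : ℝ) ^ 2) - ε ^ 2 * (0 : ℝ) / (1 + (0 : ℝ) ^ 2) ^ 2 =
        ε * d := by
  have hdε : ε * (d + 1) ≤ 8 / (3 * √3) := by rwa [← le_div_iff₀ (by positivity), div_div]
  exact kappa_inf_quartic_general
    ((abs_of_pos hε).trans_le (hε'.trans (threshold_le_of_one_le (mod_cast hd)))) hdε
end

section
/- Let d ≥ 1, let κ ∈ ℝ, and let A : [0, ∞) → M_d(ℝ) be a continuous map taking values in symmetric matrices such that for all t ≥ 0 and all y ∈ ℝ^d one has yᵀ(A(t)+A(t)ᵀ)y ≥ κ|y|². Let J : [0, ∞) → M_d(ℝ) be differentiable with J(0) = I_d and J'(t) = −J(t)A(t) for all t > 0. Then for every y ∈ ℝ^d and every t ≥ 0 one has yᵀ J(t) J(t)ᵀ y ≤ e^{−κt} |y|². -/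
open Real MeasureTheory Finset Matrix Set

/- For fixed `y`, the row vector `z t = yᵀ J t` solves `z' = -z A`, and `yᵀ J Jᵀ y = |z|²`. The
derivative of `|z|²` is `-z (A + Aᵀ) zᵀ ≤ -κ |z|²`, so `exp (κ t) |z t|²` is nonincreasing. -/

theorem le_exp_mul_of_hasDerivAt_le_mul {f f' : ℝ → ℝ} {K a t : ℝ}
    (hf : ContinuousOn f (Set.Ici a)) (hf' : ∀ s ∈ Set.Ioi a, HasDerivAt f (f' s) s)
    (hle : ∀ s ∈ Set.Ioi a, f' s ≤ K * f s) (ht : a ≤ t) :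
    f t ≤ Real.exp (K * (t - a)) * f a := by
  have hderiv (s : ℝ) (hs : s ∈ Set.Ioi a) :
      HasDerivAt (fun s => Real.exp (-K * (s - a)) * f s)
        (Real.exp (-K * (s - a)) * (f' s - K * f s)) s := by
    have hexp : HasDerivAt (fun s => Real.exp (-K * (s - a))) (Real.exp (-K * (s - a)) * -K) s := by
      simpa using (((hasDerivAt_id s).sub_const a).const_mul (-K)).exp
    exact (hexp.mul (hf' s hs)).congr_deriv (by ring)
  have hanti : AntitoneOn (fun s => Real.exp (-K * (s - a)) * f s) (Set.Ici a) := by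
    refine antitoneOn_of_hasDerivWithinAt_nonpos (convex_Ici a)
      (ContinuousOn.mul (by fun_prop) hf) (fun s hs => ?_) (fun s hs => ?_)
      (f' := fun s => Real.exp (-K * (s - a)) * (f' s - K * f s))
    all_goals rw [interior_Ici] at hs
    · exact (hderiv s hs).hasDerivWithinAt
    · exact mul_nonpos_of_nonneg_of_nonpos (Real.exp_pos _).le (sub_nonpos.2 (hle s hs))
  have hta : Real.exp (-K * (t - a)) * f t ≤ f a := by
    simpa using hanti Set.self_mem_Ici ht ht
  rwa [neg_mul, Real.exp_neg, inv_mul_le_iff₀ (Real.exp_pos _)] at hta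

section Derivatives

variable {m n 𝕜 𝔸 : Type*} [Fintype m] [NontriviallyNormedField 𝕜] [NormedRing 𝔸]
  [NormedAlgebra 𝕜 𝔸] {t : 𝕜}

theorem hasDerivAt_dotProduct {u v : 𝕜 → m → 𝔸} {u' v' : m → 𝔸}
    (hu : HasDerivAt u u' t) (hv : HasDerivAt v v' t) :
    HasDerivAt (fun s => u s ⬝ᵥ v s) (u' ⬝ᵥ v t + u t ⬝ᵥ v') t := by
  simp only [dotProduct, ← Finset.sum_add_distrib]
  exact HasDerivAt.fun_sum fun i _ => (hasDerivAt_pi.1 hu i).mul (hasDerivAt_pi.1 hv i)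

theorem hasDerivAt_const_vecMul [Finite n] {M : 𝕜 → Matrix m n 𝔸} {M' : Matrix m n 𝔸}
    (y : m → 𝔸) (hM : ∀ i j, HasDerivAt (fun s => M s i j) (M' i j) t) :
    HasDerivAt (fun s => y ᵥ* M s) (y ᵥ* M') t := by
  have := Fintype.ofFinite n
  exact hasDerivAt_pi.2 fun j => HasDerivAt.fun_sum fun i _ => (hM i j).const_mul (y i)

end Derivatives

section QuadraticForms

variable {m n R : Type*} [Fintype m] [Fintype n] [NonUnitalCommSemiring R]

theorem dotProduct_mul_transpose_mulVec (M : Matrix m n R) (y : m → R) :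
    y ⬝ᵥ ((M * Mᵀ) *ᵥ y) = (y ᵥ* M) ⬝ᵥ (y ᵥ* M) := by
  rw [← Matrix.mulVec_mulVec, Matrix.dotProduct_mulVec, Matrix.mulVec_transpose]

theorem dotProduct_add_transpose_mulVec (A : Matrix n n R) (x : n → R) :
    x ⬝ᵥ ((A + Aᵀ) *ᵥ x) = (x ᵥ* A) ⬝ᵥ x + x ⬝ᵥ (x ᵥ* A) := by
  rw [Matrix.add_mulVec, dotProduct_add, Matrix.mulVec_transpose, Matrix.dotProduct_mulVec]

end QuadraticForms

section Gronwall

variable {m n : Type*} [Fintype m] [Fintype n] {κ a t : ℝ} {A : ℝ → Matrix n n ℝ}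

theorem dotProduct_self_le_of_hasDerivAt_neg_vecMul {z : ℝ → n → ℝ}
    (hA : ∀ s ∈ Set.Ioi a, ∀ x, κ * (x ⬝ᵥ x) ≤ x ⬝ᵥ ((A s + (A s)ᵀ) *ᵥ x))
    (hz : ContinuousOn z (Set.Ici a))
    (hz' : ∀ s ∈ Set.Ioi a, HasDerivAt z (-(z s ᵥ* A s)) s) (ht : a ≤ t) :
    z t ⬝ᵥ z t ≤ Real.exp (-κ * (t - a)) * (z a ⬝ᵥ z a) := by
  have hcont : ContinuousOn (fun s => z s ⬝ᵥ z s) (Set.Ici a) :=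
    (continuous_id.dotProduct continuous_id).comp_continuousOn hz
  refine le_exp_mul_of_hasDerivAt_le_mul hcont
    (fun s hs => hasDerivAt_dotProduct (hz' s hs) (hz' s hs)) (fun s hs => ?_) ht
  have hAz := hA s hs (z s)
  rw [dotProduct_add_transpose_mulVec] at hAz
  rw [neg_dotProduct, dotProduct_neg]
  linarith

theorem gronwall_matrix_estimate_general {J : ℝ → Matrix m n ℝ}
    (hA : ∀ s ∈ Set.Ioi a, ∀ x, κ * (x ⬝ᵥ x) ≤ x ⬝ᵥ ((A s + (A s)ᵀ) *ᵥ x))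
    (hJ : ∀ i j, ContinuousOn (fun s => J s i j) (Set.Ici a))
    (hJ' : ∀ i j, ∀ s ∈ Set.Ioi a, HasDerivAt (fun s => J s i j) ((-(J s * A s)) i j) s)
    (y : m → ℝ) (ht : a ≤ t) :
    y ⬝ᵥ ((J t * (J t)ᵀ) *ᵥ y) ≤
      Real.exp (-κ * (t - a)) * (y ⬝ᵥ ((J a * (J a)ᵀ) *ᵥ y)) := by
  simp only [dotProduct_mul_transpose_mulVec]
  have hz : ContinuousOn (fun s => y ᵥ* J s) (Set.Ici a) :=
    continuousOn_pi.2 fun j => continuousOn_finsetSum _ fun i _ => (hJ i j).const_mul (y i)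
  have hz' (s : ℝ) (hs : s ∈ Set.Ioi a) :
      HasDerivAt (fun s => y ᵥ* J s) (-((y ᵥ* J s) ᵥ* A s)) s := by
    rw [Matrix.vecMul_vecMul, ← Matrix.vecMul_neg]
    exact hasDerivAt_const_vecMul y fun i j => hJ' i j s hs
  exact dotProduct_self_le_of_hasDerivAt_neg_vecMul hA hz hz' ht

end Gronwall

/-- Grönwall-type estimate: if `J(0) = I`, `J'(t) = -J(t)A(t)` with `A(t)`
symmetric and `yᵀ(A(t)+A(t)ᵀ)y ≥ κ|y|²`, then `yᵀ J(t)J(t)ᵀ y ≤ e^{-κt}|y|²`. -/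
theorem gronwall_matrix_estimate {d : ℕ} (hd : 1 ≤ d) (κ : ℝ)
    (A J : ℝ → Matrix (Fin d) (Fin d) ℝ)
    (hAcont : ∀ i j : Fin d, ContinuousOn (fun t => A t i j) (Set.Ici 0))
    (hAsymm : ∀ t : ℝ, 0 ≤ t → (A t).IsSymm)
    (hAκ : ∀ t : ℝ, 0 ≤ t → ∀ y : Fin d → ℝ,
      κ * ∑ i, y i ^ 2 ≤ y ⬝ᵥ ((A t + (A t)ᵀ) *ᵥ y))
    (hJ0 : J 0 = 1)
    (hJdiff : ∀ (i j : Fin d) (t : ℝ), 0 ≤ t →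
      DifferentiableWithinAt ℝ (fun s => J s i j) (Set.Ici 0) t)
    (hJ' : ∀ (i j : Fin d) (t : ℝ), 0 < t →
      HasDerivAt (fun s => J s i j) ((-(J t * A t)) i j) t)
    (y : Fin d → ℝ) (t : ℝ) (ht : 0 ≤ t) :
    y ⬝ᵥ ((J t * (J t)ᵀ) *ᵥ y) ≤ Real.exp (-κ * t) * ∑ i, y i ^ 2 := by
  simpa [hJ0, dotProduct, sq] using gronwall_matrix_estimate_general
    (fun s hs x => by simpa [dotProduct, sq] using hAκ s hs.le x)
    (fun i j s hs => (hJdiff i j s hs).continuousWithinAt) hJ' y ht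
end
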